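/- For every process P, either P ≡D seed(P), or there exists P' such that P ⤳_{seed(P)} P' and P ~ P'. -/

import Mathlib

namespace CCS

/-- Process terms over a set of actions `A`. -/
inductive Proc (A : Type) where
  | nil : Proc A
  | pre : A → Proc A → Proc A
  | par : Proc A → Proc A → Proc A
  | repl : A → Proc A → Proc A

namespace Proc

/-- Finite processes: no occurrence of replication. -/
def IsFin {A : Type} : Proc A → Prop
  | nil => True
  | pre _ p => IsFin p
  | par p q => IsFin p ∧ IsFin q
  | repl _ _ => False

/-- Processes of the calculus: replication is applied only to prefixed
finite processes, at top level. -/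
def Wf {A : Type} : Proc A → Prop
  | nil => True
  | pre _ p => IsFin p
  | par p q => Wf p ∧ Wf q
  | repl _ p => IsFin p

/-- Size: the number of prefixes. -/
def size {A : Type} : Proc A → ℕ
  | nil => 0
  | pre _ p => size p + 1
  | par p q => size p + size q
  | repl _ p => size p + 1

/-- `reps n p` is the parallel composition of `n` copies of `p`. -/
def reps {A : Type} : ℕ → Proc A → Proc A
  | 0, _ => nil
  | n+1, p => par p (reps n p)

/-- `bang F` is `!F`: for `F = α₁.F₁ | ... | αk.Fk` it is `!α₁.F₁ | ... | !αk.Fk`. -/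
def bang {A : Type} : Proc A → Proc A
  | nil => nil
  | pre a p => repl a p
  | par p q => par (bang p) (bang q)
  | repl a p => repl a p

end Proc

/-- The labelled transition system (no synchronisation). -/
inductive Step {A : Type} : Proc A → A → Proc A → Prop where
  | pre {a : A} {p : Proc A} : Step (Proc.pre a p) a p
  | repl {a : A} {p : Proc A} :
      Step (Proc.repl a p) a (Proc.par (Proc.repl a p) p)
  | parL {p : Proc A} {a : A} {p' : Proc A} (q : Proc A) :
      Step p a p' → Step (Proc.par p q) a (Proc.par p' q)
  | parR {q : Proc A} {a : A} {q' : Proc A} (p : Proc A) :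
      Step q a q' → Step (Proc.par p q) a (Proc.par p q')

/-- Strong bisimulations. -/
def IsBisim {A : Type} (R : Proc A → Proc A → Prop) : Prop :=
  Symmetric R ∧
    ∀ p q, R p q → ∀ a p', Step p a p' → ∃ q', Step q a q' ∧ R p' q'

/-- Strong bisimilarity `~`: the greatest strong bisimulation. -/
def Bisim {A : Type} (p q : Proc A) : Prop :=
  ∃ R, IsBisim R ∧ R p q

/-- The congruence `≡D`: the smallest congruence generated by the abelian
monoid laws for parallel composition (neutral element `0`) and the
distribution law `α.(F | α.F | ... | α.F) = α.F | α.F | ... | α.F`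
(with as many occurrences of `F` on both sides). -/
inductive EqD {A : Type} : Proc A → Proc A → Prop where
  | refl (p : Proc A) : EqD p p
  | symm {p q : Proc A} : EqD p q → EqD q p
  | trans {p q r : Proc A} : EqD p q → EqD q r → EqD p r
  | parComm (p q : Proc A) : EqD (Proc.par p q) (Proc.par q p)
  | parAssoc (p q r : Proc A) :
      EqD (Proc.par (Proc.par p q) r) (Proc.par p (Proc.par q r))
  | parNil (p : Proc A) : EqD (Proc.par p Proc.nil) p
  | distr (a : A) (F : Proc A) (n : ℕ) (hF : F.IsFin) :
      EqD (Proc.pre a (Proc.par F (Proc.reps n (Proc.pre a F))))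
          (Proc.reps (n + 1) (Proc.pre a F))
  | congPre (a : A) {p q : Proc A} : EqD p q → EqD (Proc.pre a p) (Proc.pre a q)
  | congPar {p p' q q' : Proc A} :
      EqD p p' → EqD q q' → EqD (Proc.par p q) (Proc.par p' q')
  | congRepl (a : A) {p q : Proc A} : EqD p q → EqD (Proc.repl a p) (Proc.repl a q)

/-- Finite (single-hole) contexts `D ::= [] | α.D | D|F`. -/
inductive FCtx (A : Type) where
  | hole : FCtx A
  | pre : A → FCtx A → FCtx A
  | par : FCtx A → Proc A → FCtx A

/-- Filling the hole of a finite context. -/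
def FCtx.fill {A : Type} : FCtx A → Proc A → Proc A
  | .hole, p => p
  | .pre a d, p => Proc.pre a (d.fill p)
  | .par d f, p => Proc.par (d.fill p) f

/-- Well-formedness of a finite context: the processes placed in parallel
are finite. -/
def FCtx.Wf {A : Type} : FCtx A → Prop
  | .hole => True
  | .pre _ d => d.Wf
  | .par d f => d.Wf ∧ f.IsFin

/-- Single-hole contexts `C ::= D | !α.D | C|P` (the hole never occurs
directly under a replication). -/
inductive Ctx (A : Type) where
  | ofD : FCtx A → Ctx A
  | repl : A → FCtx A → Ctx A
  | par : Ctx A → Proc A → Ctx A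

/-- Filling the hole of a context. -/
def Ctx.fill {A : Type} : Ctx A → Proc A → Proc A
  | .ofD d, p => d.fill p
  | .repl a d, p => Proc.repl a (d.fill p)
  | .par c q, p => Proc.par (c.fill p) q

/-- Well-formedness of a context. -/
def Ctx.Wf {A : Type} : Ctx A → Prop
  | .ofD d => d.Wf
  | .repl _ d => d.Wf
  | .par c p => c.Wf ∧ p.Wf

/-- `k` consecutive transitions. -/
inductive NSteps {A : Type} : Proc A → ℕ → Proc A → Prop where
  | zero (p : Proc A) : NSteps p 0 p
  | succ {p : Proc A} {a : A} {p' : Proc A} {k : ℕ} {q : Proc A} :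
      Step p a p' → NSteps p' k q → NSteps p (k + 1) q

/-- `P ⇒k Q`: `k` transitions from `P` reach a process `≡D Q`. -/
def Reduct {A : Type} (p : Proc A) (k : ℕ) (q : Proc A) : Prop :=
  ∃ p', NSteps p k p' ∧ EqD p' q

/-- `TopRepl S a G` holds when `!a.G` is one of the (top-level) replicated
parallel components of `S`. -/
inductive TopRepl {A : Type} : Proc A → A → Proc A → Prop where
  | repl (a : A) (p : Proc A) : TopRepl (Proc.repl a p) a p
  | parL {p : Proc A} {a : A} {r : Proc A} (q : Proc A) :
      TopRepl p a r → TopRepl (Proc.par p q) a r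
  | parR {q : Proc A} {a : A} {r : Proc A} (p : Proc A) :
      TopRepl q a r → TopRepl (Proc.par p q) a r

/-- `S` has only replicated components: `S = ∏i !αi.Si`. -/
def ReplOnly {A : Type} : Proc A → Prop
  | .nil => True
  | .pre _ _ => False
  | .par p q => ReplOnly p ∧ ReplOnly q
  | .repl _ p => p.IsFin

/-- `S ⫫ F` : for no component `!αi.Si` of `S` and no `k` do we have
`F ⇒k αi.Si`. -/
def Dis {A : Type} (S F : Proc A) : Prop :=
  ∀ a G, TopRepl S a G → ∀ k, ¬ Reduct F k (Proc.pre a G)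

/-- `S ▷ R` : there is `k > 0` with `S ⇒k S | R`. -/
def Purg {A : Type} (S R : Proc A) : Prop :=
  ∃ k, 0 < k ∧ Reduct S k (Proc.par S R)

/-- A process is a seed if no (well-formed) process of strictly smaller
size is bisimilar to it. -/
def IsSeed {A : Type} (p : Proc A) : Prop :=
  p.Wf ∧ ∀ q : Proc A, q.Wf → Bisim q p → p.size ≤ q.size

/-- The rewriting relation `⤳_T` (first argument), defined modulo `≡D` by
the axioms (B1) `C[α.F] ⤳_{!α.F|F'} C[0]` and (B2) `!α.F | !α.F | P ⤳_Q !α.F | P`. -/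
inductive Rw {A : Type} : Proc A → Proc A → Proc A → Prop where
  | B1 {a : A} {F F' : Proc A} (C : Ctx A) :
      F.IsFin → F'.Wf → C.Wf →
      Rw (Proc.par (Proc.repl a F) F') (C.fill (Proc.pre a F)) (C.fill Proc.nil)
  | B2 {a : A} {F P Q : Proc A} :
      F.IsFin → P.Wf → Q.Wf →
      Rw Q (Proc.par (Proc.repl a F) (Proc.par (Proc.repl a F) P))
           (Proc.par (Proc.repl a F) P)
  | eqD {T T' P P' Q Q' : Proc A} :
      EqD T T' → EqD P P' → Rw T' P' Q' → EqD Q Q' → Rw T P Q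

/-- `⤳*_T` : the reflexive transitive closure of `⤳_T`. -/
def RwStar {A : Type} (T : Proc A) : Proc A → Proc A → Prop :=
  Relation.ReflTransGen (Rw T)

/-- Convertibility `P ⋈ Q`: some process `T` satisfies `P ⤳*_T T` and `Q ⤳*_T T`. -/
def Convert {A : Type} (P Q : Proc A) : Prop :=
  ∃ T : Proc A, T.Wf ∧ RwStar T P T ∧ RwStar T Q T

/-- `∏i αi.Fi` for a list of prefixed components. -/
def prodPre {A : Type} (l : List (A × Proc A)) : Proc A :=
  (l.map fun x => Proc.pre x.1 x.2).foldr Proc.par Proc.nil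

/-- `∏i !αi.Fi` for a list of prefixed components. -/
def bangProd {A : Type} (l : List (A × Proc A)) : Proc A :=
  (l.map fun x => Proc.repl x.1 x.2).foldr Proc.par Proc.nil

end CCS

namespace CCS

section Basics
variable {A : Type}

theorem Bisim.refl (p : Proc A) : Bisim p p :=
  ⟨Eq, ⟨fun _ _ h => h.symm, by rintro p q rfl a p' h; exact ⟨p', h, rfl⟩⟩, rfl⟩

theorem Bisim.symm {p q : Proc A} (h : Bisim p q) : Bisim q p := by
  obtain ⟨R, hR, h⟩ := h
  exact ⟨R, hR, hR.1 h⟩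

theorem Bisim.step {p q : Proc A} (h : Bisim p q) {a : A} {p' : Proc A} (hs : Step p a p') :
    ∃ q', Step q a q' ∧ Bisim p' q' := by
  obtain ⟨R, hR, h⟩ := h
  obtain ⟨q', h1, h2⟩ := hR.2 p q h a p' hs
  exact ⟨q', h1, R, hR, h2⟩

/-- Coinduction with two separate clauses. -/
theorem Bisim.coind (R : Proc A → Proc A → Prop)
    (h1 : ∀ p q, R p q → ∀ a p', Step p a p' → ∃ q', Step q a q' ∧ R p' q')
    (h2 : ∀ p q, R p q → ∀ a q', Step q a q' → ∃ p', Step p a p' ∧ R p' q')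
    {p q : Proc A} (h : R p q) : Bisim p q := by
  refine ⟨fun p q => R p q ∨ R q p, ⟨fun x y h => h.symm, ?_⟩, Or.inl h⟩
  rintro p q (h | h) a p' hs
  · obtain ⟨q', h3, h4⟩ := h1 _ _ h _ _ hs
    exact ⟨q', h3, Or.inl h4⟩
  · obtain ⟨q', h3, h4⟩ := h2 _ _ h _ _ hs
    exact ⟨q', h3, Or.inr h4⟩

theorem Bisim.trans {p q r : Proc A} (h : Bisim p q) (h' : Bisim q r) : Bisim p r := by
  refine Bisim.coind (fun p r => ∃ q, Bisim p q ∧ Bisim q r) ?_ ?_ ⟨q, h, h'⟩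
  · rintro p r ⟨q, h, h'⟩ a p' hs
    obtain ⟨q', h1, h2⟩ := h.step hs
    obtain ⟨r', h3, h4⟩ := h'.step h1
    exact ⟨r', h3, q', h2, h4⟩
  · rintro p r ⟨q, h, h'⟩ a r' hs
    obtain ⟨q', h1, h2⟩ := h'.symm.step hs
    obtain ⟨p', h3, h4⟩ := h.symm.step h1
    exact ⟨p', h3, q', h4.symm, h2.symm⟩

theorem step_par {p q r : Proc A} {a : A} :
    Step (Proc.par p q) a r ↔ (∃ p', Step p a p' ∧ r = Proc.par p' q) ∨
      (∃ q', Step q a q' ∧ r = Proc.par p q') := by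
  constructor
  · intro h
    cases h with
    | parL _ h => exact Or.inl ⟨_, h, rfl⟩
    | parR _ h => exact Or.inr ⟨_, h, rfl⟩
  · rintro (⟨p', h, rfl⟩ | ⟨p', h, rfl⟩)
    · exact Step.parL _ h
    · exact Step.parR _ h

theorem step_pre {p r : Proc A} {a b : A} :
    Step (Proc.pre a p) b r ↔ b = a ∧ r = p := by
  constructor
  · intro h
    cases h
    exact ⟨rfl, rfl⟩
  · rintro ⟨rfl, rfl⟩
    exact Step.pre

theorem step_repl {p r : Proc A} {a b : A} :
    Step (Proc.repl a p) b r ↔ b = a ∧ r = Proc.par (Proc.repl a p) p := by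
  constructor
  · intro h
    cases h
    exact ⟨rfl, rfl⟩
  · rintro ⟨rfl, rfl⟩
    exact Step.repl

theorem not_step_nil {r : Proc A} {a : A} : ¬ Step Proc.nil a r := by
  intro h
  cases h

theorem Bisim.par {p p' q q' : Proc A} (h : Bisim p p') (h' : Bisim q q') :
    Bisim (Proc.par p q) (Proc.par p' q') := by
  refine Bisim.coind (fun x y => ∃ p p' q q', Bisim p p' ∧ Bisim q q' ∧ x = Proc.par p q ∧
    y = Proc.par p' q') ?_ ?_ ⟨p, p', q, q', h, h', rfl, rfl⟩
  · rintro _ _ ⟨p, p', q, q', h, h', rfl, rfl⟩ a r hs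
    rcases step_par.1 hs with ⟨p1, h1, rfl⟩ | ⟨q1, h1, rfl⟩
    · obtain ⟨p2, h2, h3⟩ := h.step h1
      exact ⟨_, Step.parL _ h2, _, _, _, _, h3, h', rfl, rfl⟩
    · obtain ⟨p2, h2, h3⟩ := h'.step h1
      exact ⟨_, Step.parR _ h2, _, _, _, _, h, h3, rfl, rfl⟩
  · rintro _ _ ⟨p, p', q, q', h, h', rfl, rfl⟩ a r hs
    rcases step_par.1 hs with ⟨p1, h1, rfl⟩ | ⟨q1, h1, rfl⟩
    · obtain ⟨p2, h2, h3⟩ := h.symm.step h1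
      exact ⟨_, Step.parL _ h2, _, _, _, _, h3.symm, h', rfl, rfl⟩
    · obtain ⟨p2, h2, h3⟩ := h'.symm.step h1
      exact ⟨_, Step.parR _ h2, _, _, _, _, h, h3.symm, rfl, rfl⟩

theorem Bisim.parComm (p q : Proc A) : Bisim (Proc.par p q) (Proc.par q p) := by
  refine Bisim.coind (fun x y => ∃ p q, x = Proc.par p q ∧ y = Proc.par q p) ?_ ?_
    ⟨p, q, rfl, rfl⟩
  · rintro _ _ ⟨p, q, rfl, rfl⟩ a r hs
    rcases step_par.1 hs with ⟨p1, h1, rfl⟩ | ⟨q1, h1, rfl⟩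
    · exact ⟨_, Step.parR _ h1, _, _, rfl, rfl⟩
    · exact ⟨_, Step.parL _ h1, _, _, rfl, rfl⟩
  · rintro _ _ ⟨p, q, rfl, rfl⟩ a r hs
    rcases step_par.1 hs with ⟨p1, h1, rfl⟩ | ⟨q1, h1, rfl⟩
    · exact ⟨_, Step.parR _ h1, _, _, rfl, rfl⟩
    · exact ⟨_, Step.parL _ h1, _, _, rfl, rfl⟩

theorem Bisim.parAssoc (p q r : Proc A) :
    Bisim (Proc.par (Proc.par p q) r) (Proc.par p (Proc.par q r)) := by
  refine Bisim.coind (fun x y => ∃ p q r, x = Proc.par (Proc.par p q) r ∧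
    y = Proc.par p (Proc.par q r)) ?_ ?_ ⟨p, q, r, rfl, rfl⟩
  · rintro _ _ ⟨p, q, r, rfl, rfl⟩ a s hs
    rcases step_par.1 hs with ⟨p1, h1, rfl⟩ | ⟨q1, h1, rfl⟩
    · rcases step_par.1 h1 with ⟨p2, h2, rfl⟩ | ⟨q2, h2, rfl⟩
      · exact ⟨_, Step.parL _ h2, _, _, _, rfl, rfl⟩
      · exact ⟨_, Step.parR _ (Step.parL _ h2), _, _, _, rfl, rfl⟩
    · exact ⟨_, Step.parR _ (Step.parR _ h1), _, _, _, rfl, rfl⟩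
  · rintro _ _ ⟨p, q, r, rfl, rfl⟩ a s hs
    rcases step_par.1 hs with ⟨p1, h1, rfl⟩ | ⟨q1, h1, rfl⟩
    · exact ⟨_, Step.parL _ (Step.parL _ h1), _, _, _, rfl, rfl⟩
    · rcases step_par.1 h1 with ⟨p2, h2, rfl⟩ | ⟨q2, h2, rfl⟩
      · exact ⟨_, Step.parL _ (Step.parR _ h2), _, _, _, rfl, rfl⟩
      · exact ⟨_, Step.parR _ h2, _, _, _, rfl, rfl⟩

theorem Bisim.parNil (p : Proc A) : Bisim (Proc.par p Proc.nil) p := by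
  refine Bisim.coind (fun x y => x = Proc.par y Proc.nil) ?_ ?_ rfl
  · rintro _ p rfl a s hs
    rcases step_par.1 hs with ⟨p1, h1, rfl⟩ | ⟨q1, h1, rfl⟩
    · exact ⟨_, h1, rfl⟩
    · exact absurd h1 not_step_nil
  · rintro _ p rfl a s hs
    exact ⟨_, Step.parL _ hs, rfl⟩

/-- The setoid of bisimilarity. -/
def bisimSetoid (A : Type) : Setoid (Proc A) :=
  ⟨Bisim, Bisim.refl, Bisim.symm, Bisim.trans⟩

/-- Proc terms modulo bisimilarity. -/
def Q (A : Type) : Type := Quotient (bisimSetoid A)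

/-- The class of a term. -/
def cl (p : Proc A) : Q A := Quotient.mk (bisimSetoid A) p

theorem cl_eq {p q : Proc A} : cl p = cl q ↔ Bisim p q :=
  ⟨fun h => Quotient.exact (s := bisimSetoid A) h, fun h => Quotient.sound (s := bisimSetoid A) h⟩

theorem cl_surj (x : Q A) : ∃ p, cl p = x := Quotient.exists_rep x

instance : Mul (Q A) :=
  ⟨Quotient.map₂ Proc.par (fun _ _ h _ _ h' => Bisim.par h h')⟩

instance : One (Q A) := ⟨cl Proc.nil⟩

theorem cl_par (p q : Proc A) : cl (Proc.par p q) = cl p * cl q := rfl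
theorem cl_nil : cl (Proc.nil : Proc A) = 1 := rfl

instance : CommMonoid (Q A) where
  mul_assoc x y z := by
    obtain ⟨p, rfl⟩ := cl_surj x
    obtain ⟨q, rfl⟩ := cl_surj y
    obtain ⟨r, rfl⟩ := cl_surj z
    exact cl_eq.2 (Bisim.parAssoc p q r)
  mul_comm x y := by
    obtain ⟨p, rfl⟩ := cl_surj x
    obtain ⟨q, rfl⟩ := cl_surj y
    exact cl_eq.2 (Bisim.parComm p q)
  mul_one x := by
    obtain ⟨p, rfl⟩ := cl_surj x
    exact cl_eq.2 (Bisim.parNil p)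
  one_mul x := by
    obtain ⟨p, rfl⟩ := cl_surj x
    exact cl_eq.2 ((Bisim.parComm _ _).trans (Bisim.parNil p))

/-- Transitions on classes. -/
def qs (x : Q A) (a : A) (y : Q A) : Prop := ∃ p p', cl p = x ∧ cl p' = y ∧ Step p a p'

theorem qs_cl {p : Proc A} {a : A} {y : Q A} : qs (cl p) a y ↔ ∃ p', Step p a p' ∧ cl p' = y := by
  constructor
  · rintro ⟨q, q', h1, rfl, h3⟩
    obtain ⟨p', h4, h5⟩ := (cl_eq.1 h1).step h3
    exact ⟨p', h4, (cl_eq.2 h5).symm⟩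
  · rintro ⟨p', h, rfl⟩
    exact ⟨p, p', rfl, rfl, h⟩

theorem qs_mul {x y z : Q A} {a : A} : qs (x * y) a z ↔
    (∃ x', qs x a x' ∧ z = x' * y) ∨ (∃ y', qs y a y' ∧ z = x * y') := by
  obtain ⟨p, rfl⟩ := cl_surj x
  obtain ⟨q, rfl⟩ := cl_surj y
  rw [← cl_par, qs_cl]
  constructor
  · rintro ⟨r, h, rfl⟩
    rcases step_par.1 h with ⟨p1, h1, rfl⟩ | ⟨q1, h1, rfl⟩
    · exact Or.inl ⟨cl p1, qs_cl.2 ⟨_, h1, rfl⟩, rfl⟩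
    · exact Or.inr ⟨cl q1, qs_cl.2 ⟨_, h1, rfl⟩, rfl⟩
  · rintro (⟨x', h, rfl⟩ | ⟨x', h, rfl⟩)
    · obtain ⟨p', h1, rfl⟩ := qs_cl.1 h
      exact ⟨_, Step.parL _ h1, rfl⟩
    · obtain ⟨p', h1, rfl⟩ := qs_cl.1 h
      exact ⟨_, Step.parR _ h1, rfl⟩

theorem qs_mul_left {x x' : Q A} {a : A} (h : qs x a x') (y : Q A) : qs (x * y) a (x' * y) :=
  qs_mul.2 (Or.inl ⟨_, h, rfl⟩)

theorem qs_mul_right {y y' : Q A} {a : A} (x : Q A) (h : qs y a y') : qs (x * y) a (x * y') :=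
  qs_mul.2 (Or.inr ⟨_, h, rfl⟩)

theorem not_qs_one {x : Q A} {a : A} : ¬ qs 1 a x := by
  rw [← cl_nil, qs_cl]
  rintro ⟨p, h, -⟩
  exact not_step_nil h

theorem qs_pre {p : Proc A} {a b : A} {x : Q A} :
    qs (cl (Proc.pre a p)) b x ↔ b = a ∧ x = cl p := by
  rw [qs_cl]
  simp only [step_pre]
  constructor
  · rintro ⟨p', ⟨rfl, rfl⟩, rfl⟩
    exact ⟨rfl, rfl⟩
  · rintro ⟨rfl, rfl⟩
    exact ⟨p, ⟨rfl, rfl⟩, rfl⟩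

theorem qs_repl {p : Proc A} {a b : A} {x : Q A} :
    qs (cl (Proc.repl a p)) b x ↔ b = a ∧ x = cl (Proc.repl a p) * cl p := by
  rw [qs_cl]
  simp only [step_repl]
  constructor
  · rintro ⟨p', ⟨rfl, rfl⟩, rfl⟩
    exact ⟨rfl, rfl⟩
  · rintro ⟨rfl, rfl⟩
    exact ⟨_, ⟨rfl, rfl⟩, rfl⟩

theorem q_coind (R : Q A → Q A → Prop)
    (h1 : ∀ x y, R x y → ∀ a x', qs x a x' → ∃ y', qs y a y' ∧ R x' y')
    (h2 : ∀ x y, R x y → ∀ a y', qs y a y' → ∃ x', qs x a x' ∧ R x' y')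
    {x y : Q A} (h : R x y) : x = y := by
  obtain ⟨p, rfl⟩ := cl_surj x
  obtain ⟨q, rfl⟩ := cl_surj y
  refine cl_eq.2 (Bisim.coind (fun p q => R (cl p) (cl q)) ?_ ?_ h)
  · intro p q h a p' hs
    obtain ⟨y, h3, h4⟩ := h1 _ _ h a _ (qs_cl.2 ⟨p', hs, rfl⟩)
    obtain ⟨q', h5, rfl⟩ := qs_cl.1 h3
    exact ⟨q', h5, h4⟩
  · intro p q h a p' hs
    obtain ⟨y, h3, h4⟩ := h2 _ _ h a _ (qs_cl.2 ⟨p', hs, rfl⟩)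
    obtain ⟨q', h5, rfl⟩ := qs_cl.1 h3
    exact ⟨q', h5, h4⟩

theorem q_ext {x y : Q A} (h : ∀ a z, qs x a z ↔ qs y a z) : x = y := by
  refine q_coind (fun u v => u = v ∨ (∀ a z, qs u a z ↔ qs v a z)) ?_ ?_ (Or.inr h)
  · rintro x y (rfl | h) a x' hs
    · exact ⟨x', hs, Or.inl rfl⟩
    · exact ⟨x', (h _ _).1 hs, Or.inl rfl⟩
  · rintro x y (rfl | h) a x' hs
    · exact ⟨x', hs, Or.inl rfl⟩
    · exact ⟨x', (h _ _).2 hs, Or.inl rfl⟩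

theorem cl_pre_congr (a : A) {p q : Proc A} (h : cl p = cl q) :
    cl (Proc.pre a p) = cl (Proc.pre a q) :=
  q_ext fun b z => by rw [qs_pre, qs_pre, h]

theorem cl_repl_congr (a : A) {p q : Proc A} (h : cl p = cl q) :
    cl (Proc.repl a p) = cl (Proc.repl a q) := by
  refine q_coind (fun u v => ∃ z, u = cl (Proc.repl a p) * z ∧ v = cl (Proc.repl a q) * z)
    ?_ ?_ ⟨1, by simp, by simp⟩
  · rintro _ _ ⟨z, rfl, rfl⟩ b x' hs
    rcases qs_mul.1 hs with ⟨x, hx, rfl⟩ | ⟨x, hx, rfl⟩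
    · obtain ⟨rfl, rfl⟩ := qs_repl.1 hx
      exact ⟨_, qs_mul_left (qs_repl.2 ⟨rfl, rfl⟩) _, cl p * z, mul_assoc _ _ _,
        by rw [h, mul_assoc]⟩
    · exact ⟨_, qs_mul_right _ hx, x, rfl, rfl⟩
  · rintro _ _ ⟨z, rfl, rfl⟩ b x' hs
    rcases qs_mul.1 hs with ⟨x, hx, rfl⟩ | ⟨x, hx, rfl⟩
    · obtain ⟨rfl, rfl⟩ := qs_repl.1 hx
      exact ⟨_, qs_mul_left (qs_repl.2 ⟨rfl, rfl⟩) _, cl p * z, mul_assoc _ _ _,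
        by rw [h, mul_assoc]⟩
    · exact ⟨_, qs_mul_right _ hx, x, rfl, rfl⟩

theorem cl_reps (n : ℕ) (p : Proc A) : cl (Proc.reps n p) = cl p ^ n := by
  induction n with
  | zero => simp [Proc.reps, cl_nil]
  | succ n ih => rw [Proc.reps, cl_par, ih, pow_succ']

theorem qs_pow {x y : Q A} {a : A} {n : ℕ} :
    qs (x ^ (n + 1)) a y ↔ ∃ x', qs x a x' ∧ y = x' * x ^ n := by
  induction n generalizing y with
  | zero => simp
  | succ n ih =>
    rw [pow_succ, qs_mul]
    constructor
    · rintro (⟨z, hz, rfl⟩ | ⟨z, hz, rfl⟩)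
      · obtain ⟨w, hw, rfl⟩ := ih.1 hz
        exact ⟨w, hw, by rw [pow_succ, mul_assoc]⟩
      · exact ⟨z, hz, mul_comm _ _⟩
    · rintro ⟨z, hz, rfl⟩
      exact Or.inr ⟨z, hz, mul_comm _ _⟩

theorem EqD.sound {p q : Proc A} (h : EqD p q) : cl p = cl q := by
  induction h with
  | refl p => rfl
  | symm _ ih => exact ih.symm
  | trans _ _ ih ih' => exact ih.trans ih'
  | parComm p q => exact cl_eq.2 (Bisim.parComm p q)
  | parAssoc p q r => exact cl_eq.2 (Bisim.parAssoc p q r)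
  | parNil p => exact cl_eq.2 (Bisim.parNil p)
  | distr a F n hF =>
    refine q_ext fun b z => ?_
    rw [qs_pre, cl_reps, qs_pow, cl_par, cl_reps]
    simp only [qs_pre]
    constructor
    · rintro ⟨rfl, rfl⟩
      exact ⟨_, ⟨rfl, rfl⟩, rfl⟩
    · rintro ⟨_, ⟨rfl, rfl⟩, rfl⟩
      exact ⟨rfl, rfl⟩
  | congPre a _ ih => exact cl_pre_congr a ih
  | congPar _ _ ih ih' => rw [cl_par, cl_par, ih, ih']
  | congRepl a _ ih => exact cl_repl_congr a ih

/-! ### Finite terms -/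

theorem Step.fin {p q : Proc A} {a : A} (h : Step p a q) (hp : p.IsFin) :
    q.IsFin ∧ p.size = q.size + 1 := by
  induction h with
  | pre => exact ⟨hp, rfl⟩
  | repl => exact hp.elim
  | parL q _ ih =>
    have := ih hp.1
    exact ⟨⟨this.1, hp.2⟩, by simp only [Proc.size]; omega⟩
  | parR q _ ih =>
    have := ih hp.2
    exact ⟨⟨hp.1, this.1⟩, by simp only [Proc.size]; omega⟩

theorem fin_exists_step {p : Proc A} (hp : p.IsFin) (h : p.size ≠ 0) : ∃ a q, Step p a q := by
  induction p with
  | nil => exact absurd rfl h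
  | pre a p => exact ⟨a, p, Step.pre⟩
  | repl => exact hp.elim
  | par p q ihp ihq =>
    by_cases h0 : p.size = 0
    · have : q.size ≠ 0 := by simp only [Proc.size] at h; omega
      obtain ⟨a, r, hr⟩ := ihq hp.2 this
      exact ⟨a, _, Step.parR _ hr⟩
    · obtain ⟨a, r, hr⟩ := ihp hp.1 h0
      exact ⟨a, _, Step.parL _ hr⟩

theorem cl_eq_one_of_size {p : Proc A} (hp : p.IsFin) (h : p.size = 0) : cl p = 1 := by
  refine q_ext fun a z => ⟨fun hs => ?_, fun hs => absurd hs not_qs_one⟩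
  obtain ⟨p', h1, -⟩ := qs_cl.1 hs
  have := (h1.fin hp).2
  omega

theorem size_eq_of_cl_eq {p q : Proc A} (hp : p.IsFin) (hq : q.IsFin) (h : cl p = cl q) :
    p.size = q.size := by
  induction hn : p.size generalizing p q with
  | zero =>
    by_contra h0
    obtain ⟨a, r, hr⟩ := fin_exists_step hq (Ne.symm h0)
    obtain ⟨p', h1, -⟩ := (cl_eq.1 h).symm.step hr
    have := (h1.fin hp).2
    omega
  | succ n ih =>
    obtain ⟨a, r, hr⟩ := fin_exists_step hp (by omega)
    obtain ⟨q', h1, h2⟩ := (cl_eq.1 h).step hr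
    have h3 := hr.fin hp
    have h4 := h1.fin hq
    have := ih h3.1 h4.1 (cl_eq.2 h2) (by omega)
    omega

end Basics

end CCS

namespace CCS

/-- Abstract finite transition monoids. -/
structure FinLTS (M A : Type) [CommMonoid M] where
  step : M → A → M → Prop
  sz : M → ℕ
  sz_mul : ∀ x y, sz (x * y) = sz x + sz y
  sz_zero : ∀ x, sz x = 0 → x = 1
  step_sz : ∀ x a y, step x a y → sz x = sz y + 1
  step_mul : ∀ x y a z, step (x * y) a z ↔
    (∃ x', step x a x' ∧ z = x' * y) ∨ (∃ y', step y a y' ∧ z = x * y')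
  exists_step : ∀ x, x ≠ 1 → ∃ a y, step x a y
  ext : ∀ x y, (∀ a z, step x a z ↔ step y a z) → x = y

namespace FinLTS

variable {M A : Type} [CommMonoid M]

theorem sz_one (L : FinLTS M A) : L.sz 1 = 0 := by
  have := L.sz_mul 1 1
  rw [mul_one] at this
  omega

theorem not_step_one (L : FinLTS M A) (a : A) (y : M) : ¬ L.step 1 a y := by
  intro h
  have := L.step_sz _ _ _ h
  rw [L.sz_one] at this
  omega

/-- Prime elements. -/
def Pr (p : M) : Prop := p ≠ 1 ∧ ∀ x y, p = x * y → x = 1 ∨ y = 1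

theorem exists_fac (L : FinLTS M A) (x : M) : ∃ s : Multiset M, (∀ p ∈ s, Pr p) ∧ s.prod = x := by
  induction hn : L.sz x using Nat.strong_induction_on generalizing x with
  | _ n ih =>
    by_cases h1 : x = 1
    · exact ⟨0, by simp, by simp [h1]⟩
    by_cases hp : Pr x
    · exact ⟨{x}, by simpa using hp, by simp⟩
    · unfold Pr at hp
      push Not at hp
      obtain ⟨y, z, rfl, hy, hz⟩ := hp h1
      have hy' : L.sz y ≠ 0 := fun h => hy (L.sz_zero _ h)
      have hz' : L.sz z ≠ 0 := fun h => hz (L.sz_zero _ h)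
      have hm := L.sz_mul y z
      obtain ⟨s, hs, hs'⟩ := ih (L.sz y) (by omega) y rfl
      obtain ⟨t, ht, ht'⟩ := ih (L.sz z) (by omega) z rfl
      refine ⟨s + t, ?_, by simp [hs', ht']⟩
      intro p hp
      rcases Multiset.mem_add.1 hp with h | h
      · exact hs p h
      · exact ht p h

theorem sz_le_of_mem (L : FinLTS M A) {s : Multiset M} {p : M} (h : p ∈ s) : L.sz p ≤ L.sz s.prod := by
  obtain ⟨t, rfl⟩ := Multiset.exists_cons_of_mem h
  rw [Multiset.prod_cons, L.sz_mul]
  omega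

open Classical in
theorem step_prod (L : FinLTS M A) (s : Multiset M) (a : A) (z : M) : L.step s.prod a z ↔
    ∃ q ∈ s, ∃ q', L.step q a q' ∧ z = q' * (s.erase q).prod := by
  constructor
  · induction s using Multiset.induction_on generalizing z with
    | empty =>
      intro h
      exact absurd h (by simpa using L.not_step_one a z)
    | cons p s ih =>
      rw [Multiset.prod_cons, L.step_mul]
      rintro (⟨x, hx, rfl⟩ | ⟨x, hx, rfl⟩)
      · exact ⟨p, by simp, x, hx, by simp⟩
      · obtain ⟨q, hq, q', hq', rfl⟩ := ih _ hx
        refine ⟨q, by simp [hq], q', hq', ?_⟩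
        by_cases hpq : p = q
        · subst hpq
          rw [Multiset.erase_cons_head, mul_left_comm, ← Multiset.prod_cons,
            Multiset.cons_erase hq]
        · rw [Multiset.erase_cons_tail _ hpq, Multiset.prod_cons]
          exact mul_left_comm _ _ _
  · rintro ⟨q, hq, q', hq', rfl⟩
    have h0 : s.prod = q * (s.erase q).prod := by
      rw [← Multiset.prod_cons, Multiset.cons_erase hq]
    rw [h0]
    exact (L.step_mul _ _ _ _).2 (Or.inl ⟨q', hq', rfl⟩)

open Classical in
theorem unique_aux (L : FinLTS M A) (n : ℕ)
    (ih : ∀ s t : Multiset M, (∀ p ∈ s, Pr p) → (∀ p ∈ t, Pr p) → s.prod = t.prod →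
      L.sz s.prod < n → s = t)
    (s t : Multiset M) (hs : ∀ p ∈ s, Pr p) (ht : ∀ p ∈ t, Pr p) (hst : s.prod = t.prod)
    (hn : L.sz s.prod = n) (p : M) (hlt : t.count p < s.count p)
    (hbig : ∀ q, L.sz p < L.sz q → s.count q = t.count q) : False := by
  choose fac hfac hfac' using L.exists_fac
  -- exponents
  have hstep : ∀ u : Multiset M, (∀ p ∈ u, Pr p) → u.prod = s.prod → ∀ q ∈ u, ∀ a q',
      L.step q a q' → (fac (q' * (u.erase q).prod)).count p
        = (fac q').count p + (u.erase q).count p := by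
    intro u hu hus q hq a q' hq'
    have h1 : L.step s.prod a (q' * (u.erase q).prod) := by
      rw [← hus, L.step_prod]
      exact ⟨q, hq, q', hq', rfl⟩
    have h2 := L.step_sz _ _ _ h1
    have h3 : fac (q' * (u.erase q).prod) = fac q' + u.erase q := by
      apply ih _ _ (hfac _)
      · intro r hr
        rcases Multiset.mem_add.1 hr with h | h
        · exact hfac _ _ h
        · exact hu _ (Multiset.mem_of_mem_erase h)
      · rw [hfac', Multiset.prod_add, hfac']
      · rw [hfac']
        omega
    rw [h3, Multiset.count_add]
  have hzero : ∀ q, L.sz q < L.sz p → (fac q).count p = 0 := by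
    intro q hq
    rw [Multiset.count_eq_zero]
    intro h
    have := L.sz_le_of_mem h
    rw [hfac'] at this
    omega
  have hps : p ∈ s := Multiset.count_pos.1 (by omega)
  by_cases hc : ∃ q ∈ s, q ≠ p
  · -- choose a step with maximal exponent
    let W : Set ℕ := {k | ∃ q ∈ s, q ≠ p ∧ ∃ a q', L.step q a q' ∧ (fac q').count p = k}
    have hWne : W.Nonempty := by
      obtain ⟨q, hq, hqp⟩ := hc
      obtain ⟨a, q', h⟩ := L.exists_step q (hs q hq).1
      exact ⟨_, q, hq, hqp, a, q', h, rfl⟩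
    have hWb : BddAbove W := by
      have hsub : W ⊆ (fun m => m) '' Set.Iic n := by
        rintro k ⟨q, hq, hqp, a, q', h, rfl⟩
        refine ⟨_, ?_, rfl⟩
        have h1 := L.sz_le_of_mem hq
        have h2 := L.step_sz _ _ _ h
        have h3 : ∀ u : Multiset M, u.count p ≤ L.sz u.prod := by
          intro u
          have hp1 : L.sz p ≠ 0 := fun h => (hs p hps).1 (L.sz_zero _ h)
          induction u using Multiset.induction_on with
          | empty => simp
          | cons r u ihu =>
            rw [Multiset.prod_cons, L.sz_mul, Multiset.count_cons]
            split_ifs with hr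
            · subst hr
              omega
            · omega
        have h4 := h3 (fac q')
        rw [hfac'] at h4
        simp only [Set.mem_Iic]
        omega
      refine BddAbove.mono hsub ?_
      simpa using bddAbove_Iic
    obtain ⟨q, hq, hqp, a, q', hqs, hmax⟩ := Nat.sSup_mem hWne hWb
    have hle : ∀ r ∈ s, r ≠ p → ∀ a r', L.step r a r' →
        (fac r').count p ≤ (fac q').count p := by
      intro r hr hrp a r' h
      rw [hmax]
      exact le_csSup hWb ⟨r, hr, hrp, a, r', h, rfl⟩
    have h1 : L.step s.prod a (q' * (s.erase q).prod) :=
      (L.step_prod _ _ _).2 ⟨q, hq, q', hqs, rfl⟩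
    have e1 := hstep s hs rfl q hq a q' hqs
    rw [Multiset.count_erase_of_ne (Ne.symm hqp)] at e1
    rw [hst, L.step_prod] at h1
    obtain ⟨r, hr, r', hrs, hz⟩ := h1
    have e2 := hstep t ht hst.symm r hr a r' hrs
    rw [← hz, e1] at e2
    have h5 : (t.erase r).count p ≤ t.count p := Multiset.count_le_of_le _ (Multiset.erase_le _ _)
    by_cases h0 : (fac r').count p = 0
    · omega
    · have h6 : ¬ L.sz r' < L.sz p := fun h => h0 (hzero _ h)
      have h7 := L.step_sz _ _ _ hrs
      have h8 := hbig r (by omega)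
      have h9 : r ∈ s := by
        rw [← Multiset.count_pos, h8, Multiset.count_pos]
        exact hr
      have h10 : r ≠ p := by
        rintro rfl
        omega
      have := hle r h9 h10 a r' hrs
      omega
  · push Not at hc
    have hsm : ∀ r ∈ t, L.sz r ≤ L.sz p := by
      intro r hr
      by_contra h
      push Not at h
      have h8 := hbig r h
      have h9 : r ∈ s := by
        rw [← Multiset.count_pos, h8, Multiset.count_pos]
        exact hr
      rw [hc r h9] at h
      omega
    have hkey : ∀ r ∈ t, s.count p - 1 = (t.erase r).count p := by
      intro r hr
      obtain ⟨a, r', h⟩ := L.exists_step r (ht r hr).1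
      have h1 := L.step_sz _ _ _ h
      have h2 := hsm r hr
      have e1 := hstep t ht hst.symm r hr a r' h
      rw [hzero r' (by omega)] at e1
      have h3 : L.step t.prod a (r' * (t.erase r).prod) :=
        (L.step_prod _ _ _).2 ⟨r, hr, r', h, rfl⟩
      rw [← hst, L.step_prod] at h3
      obtain ⟨q, hq, q', hqs, hz⟩ := h3
      obtain rfl := hc q hq
      have e2 := hstep s hs rfl q hq a q' hqs
      have h4 := L.step_sz _ _ _ hqs
      rw [hzero q' (by omega), ← hz, e1, Multiset.count_erase_self] at e2
      omega
    by_cases hpt : p ∈ t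
    · have h1 := hkey p hpt
      rw [Multiset.count_erase_self] at h1
      have := Multiset.count_pos.2 hpt
      omega
    · have ht0 : t ≠ 0 := by
        rintro rfl
        have h1 := L.sz_le_of_mem hps
        rw [hst, Multiset.prod_zero, L.sz_one] at h1
        exact (hs p hps).1 (L.sz_zero _ (by omega))
      obtain ⟨r, hr⟩ := Multiset.exists_mem_of_ne_zero ht0
      have h1 := hkey r hr
      have h2 : (t.erase r).count p = 0 := by
        rw [Multiset.count_eq_zero]
        exact fun h => hpt (Multiset.mem_of_mem_erase h)
      have h3 : s = {p} := by
        have h4 : s.card = s.count p := by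
          symm
          rw [Multiset.count_eq_card]
          exact fun x hx => (hc x hx).symm
        have h5 : s.card = 1 := by omega
        obtain ⟨x, rfl⟩ := Multiset.card_eq_one.1 h5
        simp at hps
        rw [hps]
      rw [h3, Multiset.prod_singleton, ← Multiset.cons_erase hr, Multiset.prod_cons] at hst
      rcases (hs p hps).2 _ _ hst with h | h
      · exact (ht r hr).1 h
      · rw [h, mul_one] at hst
        exact hpt (hst ▸ hr)

theorem unique (L : FinLTS M A) (s t : Multiset M) (hs : ∀ p ∈ s, Pr p) (ht : ∀ p ∈ t, Pr p)
    (hst : s.prod = t.prod) : s = t := by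
  classical
  induction hn : L.sz s.prod using Nat.strong_induction_on generalizing s t with
  | _ n ih =>
    by_contra hne
    let D : Finset M := (s + t).toFinset.filter (fun p => s.count p ≠ t.count p)
    have hD : D.Nonempty := by
      by_contra hD
      rw [Finset.not_nonempty_iff_eq_empty] at hD
      apply hne
      ext p
      by_contra hp
      have : p ∈ D := by
        simp only [D, Finset.mem_filter, Multiset.mem_toFinset, Multiset.mem_add]
        refine ⟨?_, hp⟩
        by_contra h
        push Not at h
        exact hp (by rw [Multiset.count_eq_zero.2 h.1, Multiset.count_eq_zero.2 h.2])
      rw [hD] at this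
      simp at this
    obtain ⟨p, hpD, hmax⟩ := Finset.exists_max_image D L.sz hD
    have hbig : ∀ q, L.sz p < L.sz q → s.count q = t.count q := by
      intro q hq
      by_contra h
      have : q ∈ D := by
        simp only [D, Finset.mem_filter, Multiset.mem_toFinset, Multiset.mem_add]
        refine ⟨?_, h⟩
        by_contra h'
        push Not at h'
        exact h (by rw [Multiset.count_eq_zero.2 h'.1, Multiset.count_eq_zero.2 h'.2])
      have := hmax q this
      omega
    have hp : s.count p ≠ t.count p := (Finset.mem_filter.1 hpD).2
    have ih' : ∀ s t : Multiset M, (∀ p ∈ s, Pr p) → (∀ p ∈ t, Pr p) → s.prod = t.prod →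
      L.sz s.prod < n → s = t := fun s t hs ht h h' => ih _ h' s t hs ht h rfl
    rcases lt_or_gt_of_ne hp with h | h
    · exact L.unique_aux n ih' t s ht hs hst.symm (hst ▸ hn) p h (fun q hq => (hbig q hq).symm)
    · exact L.unique_aux n ih' s t hs ht hst hn p h hbig

theorem cancel (L : FinLTS M A) {x y z : M} (h : x * z = y * z) : x = y := by
  obtain ⟨s, hs, rfl⟩ := L.exists_fac x
  obtain ⟨t, ht, rfl⟩ := L.exists_fac y
  obtain ⟨u, hu, rfl⟩ := L.exists_fac z
  rw [← Multiset.prod_add, ← Multiset.prod_add] at h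
  have := L.unique _ _ ?_ ?_ h
  · rw [add_right_cancel this]
  · intro p hp
    rcases Multiset.mem_add.1 hp with h | h
    · exact hs p h
    · exact hu p h
  · intro p hp
    rcases Multiset.mem_add.1 hp with h | h
    · exact ht p h
    · exact hu p h

/-- Decomposition of an element with a unique transition. -/
theorem decomp (L : FinLTS M A) {y x : M} {a : A} (hy : ∀ b z, L.step y b z ↔ b = a ∧ z = x) :
    ∃ p p' : M, ∃ n : ℕ, Pr p ∧ (∀ b z, L.step p b z ↔ b = a ∧ z = p') ∧
      y = p ^ (n + 1) ∧ x = p' * p ^ n := by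
  classical
  obtain ⟨s, hs, rfl⟩ := L.exists_fac y
  have hstep : ∀ q ∈ s, ∀ b q', L.step q b q' → b = a ∧ x = q' * (s.erase q).prod := by
    intro q hq b q' h
    have := (hy b (q' * (s.erase q).prod)).1 ((L.step_prod _ _ _).2 ⟨q, hq, q', h, rfl⟩)
    exact ⟨this.1, this.2.symm⟩
  have hs0 : s ≠ 0 := by
    rintro rfl
    have := (hy a x).2 ⟨rfl, rfl⟩
    exact L.not_step_one _ _ (by simpa using this)
  obtain ⟨p, hp⟩ := Multiset.exists_mem_of_ne_zero hs0
  obtain ⟨b, p', hpp⟩ := L.exists_step p (hs p hp).1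
  have hall : ∀ q ∈ s, q = p := by
    intro q hq
    by_contra hqp
    obtain ⟨c, q', hqq⟩ := L.exists_step q (hs q hq).1
    have h1 := (hstep p hp _ _ hpp).2
    have h2 := (hstep q hq _ _ hqq).2
    obtain ⟨u, hu, hu'⟩ := L.exists_fac p'
    obtain ⟨v, hv, hv'⟩ := L.exists_fac q'
    have h3 : u + s.erase p = v + s.erase q := by
      apply L.unique
      · intro r hr
        rcases Multiset.mem_add.1 hr with h | h
        · exact hu r h
        · exact hs r (Multiset.mem_of_mem_erase h)
      · intro r hr
        rcases Multiset.mem_add.1 hr with h | h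
        · exact hv r h
        · exact hs r (Multiset.mem_of_mem_erase h)
      · rw [Multiset.prod_add, Multiset.prod_add, hu', hv', ← h1, ← h2]
    have h4 := congrArg (Multiset.count p) h3
    rw [Multiset.count_add, Multiset.count_add, Multiset.count_erase_self,
      Multiset.count_erase_of_ne (Ne.symm hqp)] at h4
    have h5 : u.count p = 0 := by
      rw [Multiset.count_eq_zero]
      intro h
      have h6 := L.sz_le_of_mem h
      have h7 := L.step_sz _ _ _ hpp
      rw [hu'] at h6
      omega
    have := Multiset.count_pos.2 hp
    omega
  have hrep : s = Multiset.replicate s.card p := Multiset.eq_replicate_card.2 hall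
  obtain ⟨n, hn⟩ : ∃ n, s.card = n + 1 :=
    ⟨s.card - 1, by have := Multiset.card_pos.2 hs0; omega⟩
  rw [hn] at hrep
  have her : (s.erase p).prod = p ^ n := by
    rw [hrep, Multiset.replicate_succ, Multiset.erase_cons_head, Multiset.prod_replicate]
  refine ⟨p, p', n, hs p hp, ?_, ?_, ?_⟩
  · intro c z
    constructor
    · intro h
      have h1 := hstep p hp _ _ hpp
      have h2 := hstep p hp _ _ h
      exact ⟨h2.1, L.cancel (h2.2.symm.trans h1.2)⟩
    · rintro ⟨rfl, rfl⟩
      rwa [(hstep p hp _ _ hpp).1] at hpp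
  · rw [hrep, Multiset.prod_replicate]
  · rw [← her]
    exact (hstep p hp _ _ hpp).2

end FinLTS

end CCS

namespace CCS

section FiniteCompleteness
variable {A : Type}

theorem EqD.nilPar (p : Proc A) : EqD (Proc.par Proc.nil p) p :=
  (EqD.parComm _ _).trans (EqD.parNil p)

theorem EqD.leftComm (p q r : Proc A) :
    EqD (Proc.par p (Proc.par q r)) (Proc.par q (Proc.par p r)) :=
  (EqD.parAssoc p q r).symm.trans
    ((EqD.congPar (EqD.parComm p q) (EqD.refl r)).trans (EqD.parAssoc q p r))

theorem EqD.par4 (p q r s : Proc A) :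
    EqD (Proc.par (Proc.par p q) (Proc.par r s)) (Proc.par (Proc.par p r) (Proc.par q s)) :=
  (EqD.parAssoc p q _).trans
    ((EqD.congPar (EqD.refl p) (EqD.leftComm q r s)).trans (EqD.parAssoc p r _).symm)

/-- Parallel composition of the images of a list. -/
def prodT (c : A × Proc A → Proc A) (l : List (A × Proc A)) : Proc A :=
  (l.map c).foldr Proc.par Proc.nil

theorem prodT_nil (c : A × Proc A → Proc A) : prodT c [] = Proc.nil := rfl
theorem prodT_cons (c : A × Proc A → Proc A) (x : A × Proc A) (l : List (A × Proc A)) :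
    prodT c (x :: l) = Proc.par (c x) (prodT c l) := rfl

theorem prodT_perm (c : A × Proc A → Proc A) {l m : List (A × Proc A)} (h : l.Perm m) :
    EqD (prodT c l) (prodT c m) := by
  induction h with
  | nil => exact EqD.refl _
  | cons x _ ih => exact EqD.congPar (EqD.refl _) ih
  | swap x y l => exact EqD.leftComm _ _ _
  | trans _ _ ih ih' => exact ih.trans ih'

theorem prodT_append (c : A × Proc A → Proc A) (l m : List (A × Proc A)) :
    EqD (prodT c (l ++ m)) (Proc.par (prodT c l) (prodT c m)) := by
  induction l with
  | nil => exact (EqD.nilPar _).symm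
  | cons x l ih =>
    exact (EqD.congPar (EqD.refl _) ih).trans (EqD.parAssoc _ _ _).symm

theorem prodT_match {B : Type} (c : A × Proc A → Proc A) (f : A × Proc A → B)
    {l m : List (A × Proc A)} (h : (l.map f).Perm (m.map f))
    (hc : ∀ x ∈ l, ∀ y ∈ m, f x = f y → EqD (c x) (c y)) : EqD (prodT c l) (prodT c m) := by
  classical
  induction l generalizing m with
  | nil =>
    have : m = [] := by
      have := h.length_eq
      simp at this
      exact List.length_eq_zero_iff.1 this.symm
    subst this
    exact EqD.refl _
  | cons x l ih =>
    have hx : f x ∈ m.map f := h.subset (by simp)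
    obtain ⟨y, hy, hxy⟩ := List.mem_map.1 hx
    have hp := List.perm_cons_erase hy
    have h2 : (l.map f).Perm ((m.erase y).map f) := by
      have := h.trans (hp.map f)
      rw [List.map_cons, List.map_cons, hxy] at this
      exact this.cons_inv
    have h3 := ih h2 (fun u hu v hv => hc u (List.mem_cons_of_mem _ hu) v (List.mem_of_mem_erase hv))
    exact (EqD.congPar (hc x (by simp) y hy hxy.symm) h3).trans (prodT_perm c hp).symm

theorem cl_prodT (c : A × Proc A → Proc A) (l : List (A × Proc A)) :
    cl (prodT c l) = (l.map (fun x => cl (c x))).prod := by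
  induction l with
  | nil => rfl
  | cons x l ih => rw [prodT_cons, cl_par, ih, List.map_cons, List.prod_cons]

/-- The prefix of a pair. -/
def pr (x : A × Proc A) : Proc A := Proc.pre x.1 x.2

/-- The replication of a pair. -/
def rp (x : A × Proc A) : Proc A := Proc.repl x.1 x.2

/-- Classes of finite terms. -/
def finQ (A : Type) : Submonoid (Q A) where
  carrier := {x | ∃ p : Proc A, p.IsFin ∧ cl p = x}
  one_mem' := ⟨Proc.nil, trivial, rfl⟩
  mul_mem' := by
    rintro _ _ ⟨p, hp, rfl⟩ ⟨q, hq, rfl⟩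
    exact ⟨Proc.par p q, ⟨hp, hq⟩, rfl⟩

theorem finQ_cl {p : Proc A} (hp : p.IsFin) : cl p ∈ finQ A := ⟨p, hp, rfl⟩

theorem finQ_step {x y : Q A} {a : A} (hx : x ∈ finQ A) (h : qs x a y) : y ∈ finQ A := by
  obtain ⟨p, hp, rfl⟩ := hx
  obtain ⟨p', h1, rfl⟩ := qs_cl.1 h
  exact finQ_cl (h1.fin hp).1

/-- Size of the class of a finite term. -/
noncomputable def fsz (x : finQ A) : ℕ := (Classical.choose x.2).size

theorem fsz_cl {p : Proc A} (hp : p.IsFin) (h : cl p ∈ finQ A) : fsz ⟨cl p, h⟩ = p.size := by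
  have := Classical.choose_spec h
  exact size_eq_of_cl_eq this.1 hp this.2

theorem fsz_eq {p : Proc A} (hp : p.IsFin) {x : finQ A} (h : x.1 = cl p) : fsz x = p.size := by
  obtain ⟨x, hx⟩ := x
  simp only at h
  subst h
  exact fsz_cl hp _

theorem finQ_rep (x : finQ A) : ∃ p : Proc A, p.IsFin ∧ x.1 = cl p := by
  obtain ⟨x, hx⟩ := x
  obtain ⟨p, hp, h⟩ := hx
  exact ⟨p, hp, h.symm⟩

/-- The transition monoid of finite terms. -/
noncomputable def finLTS (A : Type) : FinLTS (finQ A) A where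
  step x a y := qs x.1 a y.1
  sz := fsz
  sz_mul := by
    intro x y
    obtain ⟨p, hp, h⟩ := finQ_rep x
    obtain ⟨q, hq, h'⟩ := finQ_rep y
    rw [fsz_eq hp h, fsz_eq hq h']
    exact fsz_eq (p := Proc.par p q) ⟨hp, hq⟩ (by rw [Submonoid.coe_mul, h, h', cl_par])
  sz_zero := by
    intro x h0
    obtain ⟨p, hp, h⟩ := finQ_rep x
    rw [fsz_eq hp h] at h0
    exact Subtype.ext (h.trans (cl_eq_one_of_size hp h0))
  step_sz := by
    intro x a y hs
    obtain ⟨p, hp, h⟩ := finQ_rep x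
    rw [h] at hs
    obtain ⟨p', h1, h2⟩ := qs_cl.1 hs
    rw [fsz_eq hp h, fsz_eq (h1.fin hp).1 h2.symm]
    exact (h1.fin hp).2
  step_mul := by
    rintro ⟨x, hx⟩ ⟨y, hy⟩ a ⟨z, hz⟩
    constructor
    · intro h
      rcases qs_mul.1 h with ⟨x', h1, h2⟩ | ⟨x', h1, h2⟩
      · exact Or.inl ⟨⟨x', finQ_step hx h1⟩, h1, Subtype.ext h2⟩
      · exact Or.inr ⟨⟨x', finQ_step hy h1⟩, h1, Subtype.ext h2⟩
    · rintro (⟨x', h1, h2⟩ | ⟨x', h1, h2⟩)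
      · exact qs_mul.2 (Or.inl ⟨x'.1, h1, congrArg Subtype.val h2⟩)
      · exact qs_mul.2 (Or.inr ⟨x'.1, h1, congrArg Subtype.val h2⟩)
  exists_step := by
    rintro ⟨_, p, hp, rfl⟩ h
    have h0 : p.size ≠ 0 := fun h0 => h (Subtype.ext (cl_eq_one_of_size hp h0))
    obtain ⟨a, q, hs⟩ := fin_exists_step hp h0
    exact ⟨a, ⟨cl q, finQ_cl (hs.fin hp).1⟩, qs_cl.2 ⟨q, hs, rfl⟩⟩
  ext := by
    rintro ⟨x, hx⟩ ⟨y, hy⟩ h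
    refine Subtype.ext (q_ext fun a z => ⟨fun hs => ?_, fun hs => ?_⟩)
    · exact (h a ⟨z, finQ_step hx hs⟩).1 hs
    · exact (h a ⟨z, finQ_step hy hs⟩).2 hs

open Classical in
/-- Class of a term, in the monoid of finite classes (junk value `1` if not finite). -/
noncomputable def fcl (p : Proc A) : finQ A := if h : p.IsFin then ⟨cl p, finQ_cl h⟩ else 1

theorem fcl_val {p : Proc A} (h : p.IsFin) : (fcl p : Q A) = cl p := by
  simp [fcl, h]

theorem pr_fin {x : A × Proc A} (h : x.2.IsFin) : (pr x).IsFin := h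

theorem prodT_pr_fin {l : List (A × Proc A)} (h : ∀ x ∈ l, x.2.IsFin) : (prodT pr l).IsFin := by
  induction l with
  | nil => trivial
  | cons x l ih =>
    exact ⟨h x (by simp), ih fun y hy => h y (by simp [hy])⟩

theorem prodT_pr_size {l : List (A × Proc A)} {x : A × Proc A} (h : x ∈ l) :
    x.2.size < (prodT pr l).size := by
  induction l with
  | nil => simp at h
  | cons y l ih =>
    rw [prodT_cons]
    simp only [Proc.size, pr]
    rcases List.mem_cons.1 h with rfl | h
    · omega
    · have := ih h
      omega

theorem fcl_prod {l : List (A × Proc A)} (h : ∀ x ∈ l, x.2.IsFin) :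
    (((l.map (fun x => fcl (pr x))).prod : finQ A) : Q A) = cl (prodT pr l) := by
  induction l with
  | nil => rfl
  | cons x l ih =>
    rw [prodT_cons, cl_par, List.map_cons, List.prod_cons, Submonoid.coe_mul,
      ih fun y hy => h y (by simp [hy]), fcl_val (pr_fin (h x (by simp)))]

theorem prodT_replicate (n : ℕ) (a : A) (H : Proc A) :
    prodT pr (List.replicate n (a, H)) = Proc.reps n (Proc.pre a H) := by
  induction n with
  | zero => rfl
  | succ n ih => rw [List.replicate_succ, prodT_cons, ih]; rfl

theorem fin_decomp (n : ℕ)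
    (T : ∀ X Y : Proc A, X.IsFin → Y.IsFin → X.size < n → cl X = cl Y → EqD X Y)
    (X : Proc A) (hX : X.IsFin) (hn : X.size ≤ n) :
    ∃ K : List (A × Proc A), (∀ x ∈ K, x.2.IsFin) ∧ (∀ x ∈ K, FinLTS.Pr (fcl (pr x))) ∧
      EqD X (prodT pr K) := by
  induction X with
  | nil => exact ⟨[], by simp, by simp, EqD.refl _⟩
  | repl => exact hX.elim
  | par p q ihp ihq =>
    simp only [Proc.size] at hn
    obtain ⟨K, h1, h2, h3⟩ := ihp hX.1 (by omega)
    obtain ⟨K', h1', h2', h3'⟩ := ihq hX.2 (by omega)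
    refine ⟨K ++ K', ?_, ?_, (EqD.congPar h3 h3').trans (prodT_append _ _ _).symm⟩
    · intro x hx
      rcases List.mem_append.1 hx with h | h
      · exact h1 x h
      · exact h1' x h
    · intro x hx
      rcases List.mem_append.1 hx with h | h
      · exact h2 x h
      · exact h2' x h
  | pre a p ih =>
    simp only [Proc.size] at hn
    have hp : p.IsFin := hX
    obtain ⟨u, u', k, hu, hstep, hy, hx⟩ := (finLTS A).decomp (y := ⟨cl (Proc.pre a p), finQ_cl hX⟩)
      (x := ⟨cl p, finQ_cl hp⟩) (a := a) (by
        rintro b ⟨z, hz⟩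
        rw [Subtype.mk.injEq]
        exact qs_pre)
    obtain ⟨u', H, hH, rfl⟩ := u'
    have hu1 : u = fcl (pr (a, H)) := by
      apply (finLTS A).ext
      intro b z
      rw [hstep]
      change _ ↔ qs (fcl (pr (a, H)) : Q A) b z.1
      rw [fcl_val (pr_fin hH)]
      exact ((and_congr_right fun _ => Subtype.ext_iff)).trans qs_pre.symm
    subst hu1
    have hpc : cl p = cl (Proc.par H (Proc.reps k (Proc.pre a H))) := by
      rw [cl_par, cl_reps]
      have := congrArg Subtype.val hx
      rw [Submonoid.coe_mul, SubmonoidClass.coe_pow, fcl_val (pr_fin hH)] at this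
      exact this
    have hreps : ∀ k, (Proc.reps k (Proc.pre a H)).IsFin := by
      intro k
      induction k with
      | zero => trivial
      | succ k ih => exact ⟨hH, ih⟩
    have h1 : EqD p (Proc.par H (Proc.reps k (Proc.pre a H))) :=
      T _ _ hp ⟨hH, hreps k⟩ (by omega) hpc
    refine ⟨List.replicate (k + 1) (a, H), ?_, ?_, ?_⟩
    · intro x hx
      rw [List.eq_of_mem_replicate hx]
      exact hH
    · intro x hx
      rw [List.eq_of_mem_replicate hx]
      exact hu
    · rw [prodT_replicate]
      exact (EqD.congPre a h1).trans (EqD.distr a H k hH)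

/-- For finite terms, bisimilarity is included in the congruence. -/
theorem fin_complete {X Y : Proc A} (hX : X.IsFin) (hY : Y.IsFin) (h : cl X = cl Y) :
    EqD X Y := by
  suffices H : ∀ n, ∀ X Y : Proc A, X.IsFin → Y.IsFin → X.size < n → cl X = cl Y → EqD X Y from
    H (X.size + 1) X Y hX hY (Nat.lt_succ_self _) h
  intro n
  induction n with
  | zero => intro X Y _ _ h; omega
  | succ n ih =>
    intro X Y hX hY hn h
    have hs := size_eq_of_cl_eq hX hY h
    obtain ⟨K, h1, h2, h3⟩ := fin_decomp n ih X hX (by omega)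
    obtain ⟨K', h1', h2', h3'⟩ := fin_decomp n ih Y hY (by omega)
    refine h3.trans (EqD.trans ?_ h3'.symm)
    have hsz := size_eq_of_cl_eq hX (prodT_pr_fin h1) h3.sound
    apply prodT_match pr (fun x => fcl (pr x))
    · rw [← Multiset.coe_eq_coe]
      apply (finLTS A).unique
      · intro p hp
        obtain ⟨x, hx, rfl⟩ := List.mem_map.1 (Multiset.mem_coe.1 hp)
        exact h2 x hx
      · intro p hp
        obtain ⟨x, hx, rfl⟩ := List.mem_map.1 (Multiset.mem_coe.1 hp)
        exact h2' x hx
      · rw [Multiset.prod_coe, Multiset.prod_coe]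
        apply Subtype.ext
        rw [fcl_prod h1, fcl_prod h1', ← h3.sound, ← h3'.sound, h]
    · rintro ⟨a, F⟩ hx ⟨b, G⟩ hy hxy
      have h5 := congrArg Subtype.val hxy
      have hF : F.IsFin := h1 _ hx
      have hG : G.IsFin := h1' _ hy
      rw [fcl_val (pr_fin hF), fcl_val (pr_fin hG)] at h5
      have h6 : qs (cl (pr (a, F))) a (cl F) := qs_pre.2 ⟨rfl, rfl⟩
      rw [h5] at h6
      obtain ⟨h7, h8⟩ := qs_pre.1 h6
      simp only at h7 h8
      subst h7
      have := prodT_pr_size hx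
      simp only at this
      exact EqD.congPre _ (ih F G hF hG (by omega) h8)

end FiniteCompleteness

end CCS

namespace CCS

section Replication
variable {A : Type}

/-- The class of a product of replicated prefixes. -/
def B (l : List (A × Proc A)) : Q A := cl (prodT rp l)

theorem B_cons (x : A × Proc A) (l : List (A × Proc A)) : B (x :: l) = cl (rp x) * B l := rfl

theorem qs_B {l : List (A × Proc A)} {a : A} {z : Q A} :
    qs (B l) a z ↔ ∃ H, (a, H) ∈ l ∧ z = B l * cl H := by
  induction l generalizing z with
  | nil =>
    constructor
    · intro h
      exact absurd h not_qs_one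
    · rintro ⟨H, h, -⟩
      simp at h
  | cons x l ih =>
    rw [B_cons, qs_mul]
    constructor
    · rintro (⟨u, hu, rfl⟩ | ⟨u, hu, rfl⟩)
      · obtain ⟨rfl, rfl⟩ := qs_repl.1 hu
        exact ⟨x.2, by simp, mul_right_comm _ _ _⟩
      · obtain ⟨H, hH, rfl⟩ := ih.1 hu
        exact ⟨H, by simp [hH], (mul_assoc _ _ _).symm⟩
    · rintro ⟨H, hH, rfl⟩
      rcases List.mem_cons.1 hH with h | h
      · left
        refine ⟨cl (rp x) * cl H, ?_, mul_right_comm _ _ _⟩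
        subst h
        exact qs_repl.2 ⟨rfl, rfl⟩
      · exact Or.inr ⟨_, ih.2 ⟨H, h, rfl⟩, mul_assoc _ _ _⟩

theorem qs_prodpr {s : List (A × Proc A)} {a : A} {z : Q A} (h : qs (cl (prodT pr s)) a z) :
    ∃ H s', s.Perm ((a, H) :: s') ∧ z = cl H * cl (prodT pr s') := by
  induction s generalizing z with
  | nil => exact absurd h not_qs_one
  | cons x s ih =>
    rw [prodT_cons, cl_par, qs_mul] at h
    rcases h with ⟨u, hu, rfl⟩ | ⟨u, hu, rfl⟩
    · obtain ⟨rfl, rfl⟩ := qs_pre.1 hu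
      exact ⟨x.2, s, List.Perm.refl _, rfl⟩
    · obtain ⟨H, s', hp, rfl⟩ := ih hu
      refine ⟨H, x :: s', (hp.cons x).trans (List.Perm.swap _ _ _), ?_⟩
      rw [prodT_cons, cl_par, mul_left_comm]

theorem cl_prodpr_cons {s s' : List (A × Proc A)} {x : A × Proc A} (h : s.Perm (x :: s')) :
    cl (prodT pr s) = cl (pr x) * cl (prodT pr s') :=
  (prodT_perm pr h).sound

theorem cl_prodpr_append (s t : List (A × Proc A)) :
    cl (prodT pr (s ++ t)) = cl (prodT pr s) * cl (prodT pr t) :=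
  (prodT_append pr s t).sound

/-- Proof principle for equality in the presence of replicated components. -/
theorem B_upto {l : List (A × Proc A)} {u v : Q A}
    (h1 : ∀ a u', qs u a u' → qs (B l * v) a (B l * u'))
    (h2 : ∀ a v', qs v a v' → qs (B l * u) a (B l * v')) : B l * u = B l * v := by
  refine q_coind (fun x y => x = y ∨ ∃ z, x = B l * u * z ∧ y = B l * v * z) ?_ ?_
    (Or.inr ⟨1, by simp, by simp⟩)
  · rintro x y (rfl | ⟨z, rfl, rfl⟩) a x' hs
    · exact ⟨x', hs, Or.inl rfl⟩
    · rcases qs_mul.1 hs with ⟨w, hw, rfl⟩ | ⟨w, hw, rfl⟩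
      · have hw0 := hw
        clear hw
        rcases qs_mul.1 hw0 with ⟨w, hw, rfl⟩ | ⟨w, hw, rfl⟩
        · obtain ⟨H, hH, rfl⟩ := qs_B.1 hw
          exact ⟨_, qs_mul_left (qs_mul_left hw _) _, Or.inr ⟨cl H * z, by ac_rfl, by ac_rfl⟩⟩
        · exact ⟨_, qs_mul_left (h1 _ _ hw) _, Or.inl rfl⟩
      · exact ⟨_, qs_mul_right _ hw, Or.inr ⟨w, rfl, rfl⟩⟩
  · rintro x y (rfl | ⟨z, rfl, rfl⟩) a x' hs
    · exact ⟨x', hs, Or.inl rfl⟩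
    · rcases qs_mul.1 hs with ⟨w, hw, rfl⟩ | ⟨w, hw, rfl⟩
      · have hw0 := hw
        clear hw
        rcases qs_mul.1 hw0 with ⟨w, hw, rfl⟩ | ⟨w, hw, rfl⟩
        · obtain ⟨H, hH, rfl⟩ := qs_B.1 hw
          exact ⟨_, qs_mul_left (qs_mul_left hw _) _, Or.inr ⟨cl H * z, by ac_rfl, by ac_rfl⟩⟩
        · exact ⟨_, qs_mul_left (h2 _ _ hw) _, Or.inl rfl⟩
      · exact ⟨_, qs_mul_right _ hw, Or.inr ⟨w, rfl, rfl⟩⟩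

theorem B_pre_congr {l : List (A × Proc A)} (a : A) {p q : Proc A}
    (h : B l * cl p = B l * cl q) : B l * cl (Proc.pre a p) = B l * cl (Proc.pre a q) := by
  apply B_upto
  · intro b u hu
    obtain ⟨rfl, rfl⟩ := qs_pre.1 hu
    rw [h]
    exact qs_mul_right _ (qs_pre.2 ⟨rfl, rfl⟩)
  · intro b u hu
    obtain ⟨rfl, rfl⟩ := qs_pre.1 hu
    rw [← h]
    exact qs_mul_right _ (qs_pre.2 ⟨rfl, rfl⟩)

theorem B_absorb {l : List (A × Proc A)} {x : A × Proc A} (h : x ∈ l) :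
    B l * cl (pr x) = B l := by
  rw [← mul_one (B l), mul_assoc, one_mul]
  apply B_upto
  · intro b u hu
    obtain ⟨rfl, rfl⟩ := qs_pre.1 hu
    rw [mul_one]
    exact qs_B.2 ⟨x.2, h, rfl⟩
  · intro b u hu
    exact absurd hu not_qs_one

theorem B_absorbed {l : List (A × Proc A)} {a : A} {p : Proc A}
    (h : B l * cl (Proc.pre a p) = B l) : ∃ H, (a, H) ∈ l ∧ B l * cl p = B l * cl H := by
  have h1 : qs (B l * cl (Proc.pre a p)) a (B l * cl p) :=
    qs_mul_right _ (qs_pre.2 ⟨rfl, rfl⟩)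
  rw [h] at h1
  exact qs_B.1 h1

/-- Two mutually covering families of replicated prefixes are bisimilar. -/
theorem B_cover {l m : List (A × Proc A)}
    (h1 : ∀ a H, (a, H) ∈ l → ∃ K, (a, K) ∈ m ∧ B l * cl H = B l * cl K)
    (h2 : ∀ a K, (a, K) ∈ m → ∃ H, (a, H) ∈ l ∧ B l * cl H = B l * cl K) : B l = B m := by
  refine q_coind (fun x y => ∃ z, x = B l * z ∧ y = B m * z) ?_ ?_ ⟨1, by simp, by simp⟩
  · rintro _ _ ⟨z, rfl, rfl⟩ a x' hs
    rcases qs_mul.1 hs with ⟨w, hw, rfl⟩ | ⟨w, hw, rfl⟩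
    · obtain ⟨H, hH, rfl⟩ := qs_B.1 hw
      obtain ⟨K, hK, e⟩ := h1 _ _ hH
      exact ⟨_, qs_mul_left (qs_B.2 ⟨K, hK, rfl⟩) _, cl K * z, by rw [e, mul_assoc],
        mul_assoc _ _ _⟩
    · exact ⟨_, qs_mul_right _ hw, w, rfl, rfl⟩
  · rintro _ _ ⟨z, rfl, rfl⟩ a x' hs
    rcases qs_mul.1 hs with ⟨w, hw, rfl⟩ | ⟨w, hw, rfl⟩
    · obtain ⟨H, hH, rfl⟩ := qs_B.1 hw
      obtain ⟨K, hK, e⟩ := h2 _ _ hH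
      exact ⟨_, qs_mul_left (qs_B.2 ⟨K, hK, rfl⟩) _, cl H * z, by rw [e, mul_assoc],
        mul_assoc _ _ _⟩
    · exact ⟨_, qs_mul_right _ hw, w, rfl, rfl⟩

theorem B_pump {l K : List (A × Proc A)} (h : B l * cl (prodT pr K) = B l) :
    B (l ++ K) = B l := by
  refine q_coind (fun x y => ∃ z s, s ⊆ K ∧ x = B (l ++ K) * z ∧ y = B l * z * cl (prodT pr s))
    ?_ ?_ ⟨1, [], by simp, by simp, by simp [prodT_nil, cl_nil]⟩
  · rintro _ _ ⟨z, s, hs, rfl, rfl⟩ a x' hx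
    rcases qs_mul.1 hx with ⟨w, hw, rfl⟩ | ⟨w, hw, rfl⟩
    · obtain ⟨H, hH, rfl⟩ := qs_B.1 hw
      rcases List.mem_append.1 hH with hH | hH
      · exact ⟨_, qs_mul_left (qs_mul_left (qs_B.2 ⟨H, hH, rfl⟩) _) _, cl H * z, s, hs,
          by ac_rfl, by ac_rfl⟩
      · obtain ⟨u, v, huv⟩ := List.append_of_mem hH
        have hp : K.Perm ((a, H) :: (u ++ v)) := by
          rw [huv]
          exact List.perm_middle
        have e : B l * z * cl (prodT pr s)
            = B l * cl (pr (a, H)) * cl (prodT pr (u ++ v)) * z * cl (prodT pr s) := by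
          rw [mul_assoc (B l) (cl (pr (a, H))), ← cl_prodpr_cons hp, h]
        refine ⟨B l * cl H * cl (prodT pr (u ++ v)) * z * cl (prodT pr s), ?_,
          cl H * z, (u ++ v) ++ s, ?_, by ac_rfl, ?_⟩
        · rw [e]
          exact qs_mul_left (qs_mul_left (qs_mul_left
            (qs_mul_right _ (qs_pre.2 ⟨rfl, rfl⟩)) _) _) _
        · intro y hy
          rcases List.mem_append.1 hy with hy | hy
          · exact hp.symm.subset (List.mem_cons_of_mem _ hy)
          · exact hs hy
        · rw [cl_prodpr_append (u ++ v) s]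
          ac_rfl
    · exact ⟨_, qs_mul_left (qs_mul_right _ hw) _, w, s, hs, rfl, rfl⟩
  · rintro _ _ ⟨z, s, hs, rfl, rfl⟩ a x' hx
    rcases qs_mul.1 hx with ⟨w, hw, rfl⟩ | ⟨w, hw, rfl⟩
    · have hw0 := hw
      clear hw
      rcases qs_mul.1 hw0 with ⟨w, hw, rfl⟩ | ⟨w, hw, rfl⟩
      · obtain ⟨H, hH, rfl⟩ := qs_B.1 hw
        exact ⟨_, qs_mul_left (qs_B.2 ⟨H, List.mem_append_left _ hH, rfl⟩) _, cl H * z, s, hs,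
          by ac_rfl, by ac_rfl⟩
      · exact ⟨_, qs_mul_right _ hw, w, s, hs, rfl, rfl⟩
    · obtain ⟨H, s', hp, rfl⟩ := qs_prodpr hw
      refine ⟨_, qs_mul_left (qs_B.2 ⟨H, List.mem_append_right _ (hs (hp.symm.subset
        (by simp))), rfl⟩) _, cl H * z, s', ?_, by ac_rfl, by ac_rfl⟩
      intro y hy
      exact hs (hp.symm.subset (List.mem_cons_of_mem _ hy))

theorem comps {X : Proc A} (hX : X.IsFin) :
    ∃ K : List (A × Proc A), EqD X (prodT pr K) := by
  induction X with
  | nil => exact ⟨[], EqD.refl _⟩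
  | repl => exact hX.elim
  | par p q ihp ihq =>
    obtain ⟨K, h⟩ := ihp hX.1
    obtain ⟨K', h'⟩ := ihq hX.2
    exact ⟨K ++ K', (EqD.congPar h h').trans (prodT_append _ _ _).symm⟩
  | pre a p => exact ⟨[(a, p)], (EqD.parNil _).symm⟩

theorem B_absorb_list {l s : List (A × Proc A)} (h : s ⊆ l) :
    B l * cl (prodT pr s) = B l := by
  induction s with
  | nil => exact mul_one _
  | cons x s ih =>
    rw [prodT_cons, cl_par, ← mul_assoc, B_absorb (h (by simp)),
      ih fun y hy => h (List.mem_cons_of_mem _ hy)]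

theorem B_abs_left {l : List (A × Proc A)} {X Y : Proc A} (hX : X.IsFin) (hY : Y.IsFin)
    (h : B l * cl X * cl Y = B l) : B l * cl X = B l := by
  obtain ⟨K, hK⟩ := comps hX
  obtain ⟨K', hK'⟩ := comps hY
  rw [hK.sound, hK'.sound, mul_assoc, ← cl_prodpr_append] at h
  have h1 := B_pump h
  rw [hK.sound, ← h1]
  apply B_absorb_list
  intro x hx
  exact List.mem_append_right _ (List.mem_append_left _ hx)

theorem B_consume {l m : List (A × Proc A)} (hm : ∀ x ∈ m, x.2.IsFin) {F E : Proc A}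
    (hF : F.IsFin) (hE : E.IsFin) (h : B l * cl F = B m * cl E) :
    ∃ E' : Proc A, E'.IsFin ∧ B l = B m * cl E' := by
  induction hn : F.size generalizing F E with
  | zero =>
    rw [cl_eq_one_of_size hF hn, mul_one] at h
    exact ⟨E, hE, h⟩
  | succ n ih =>
    obtain ⟨a, F', hs⟩ := fin_exists_step hF (by omega)
    have h1 : qs (B l * cl F) a (B l * cl F') := qs_mul_right _ (qs_cl.2 ⟨F', hs, rfl⟩)
    have h2 := hs.fin hF
    rw [h] at h1
    rcases qs_mul.1 h1 with ⟨w, hw, e⟩ | ⟨w, hw, e⟩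
    · obtain ⟨H, hH, rfl⟩ := qs_B.1 hw
      rw [mul_assoc, ← cl_par] at e
      exact ih h2.1 (E := Proc.par H E) ⟨hm _ hH, hE⟩ e (by omega)
    · obtain ⟨E', h3, rfl⟩ := qs_cl.1 hw
      exact ih h2.1 (h3.fin hE).1 e (by omega)

theorem B_eq_of_eq {l m : List (A × Proc A)} (hl : ∀ x ∈ l, x.2.IsFin)
    (hm : ∀ x ∈ m, x.2.IsFin) {F E : Proc A}
    (hF : F.IsFin) (hE : E.IsFin) (h : B l * cl F = B m * cl E) : B l = B m := by
  obtain ⟨E', hE', e⟩ := B_consume hm hF hE h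
  obtain ⟨F', hF', e'⟩ := B_consume hl hE hF h.symm
  have h1 : B m * cl E' * cl F' = B m := by rw [← e, ← e']
  rw [e, B_abs_left hE' hF' h1]

/-- Reduced finite terms: no prefixed subterm is absorbed by `b`. -/
def Red (b : Q A) : Proc A → Prop
  | .nil => True
  | .pre a p => b * cl (Proc.pre a p) ≠ b ∧ Red b p
  | .par p q => Red b p ∧ Red b q
  | .repl _ _ => False

theorem Red.fin {b : Q A} {p : Proc A} (h : Red b p) : p.IsFin := by
  induction p with
  | nil => trivial
  | pre a p ih => exact ih h.2
  | par p q ihp ihq => exact ⟨ihp h.1, ihq h.2⟩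
  | repl => exact h.elim

theorem Red.step {b : Q A} {p q : Proc A} {a : A} (h : Red b p) (hs : Step p a q) : Red b q := by
  induction hs with
  | pre => exact h.2
  | repl => exact h.elim
  | parL _ _ ih => exact ⟨ih h.1, h.2⟩
  | parR _ _ ih => exact ⟨h.1, ih h.2⟩

theorem Red.size_zero {l : List (A × Proc A)} {p : Proc A} (h : Red (B l) p)
    (he : B l * cl p = B l) : p.size = 0 := by
  induction p with
  | nil => rfl
  | pre a p ih => exact absurd he h.1
  | repl => exact h.elim
  | par p q ihp ihq =>
    rw [cl_par, ← mul_assoc] at he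
    have h1 := ihp h.1 (B_abs_left h.1.fin h.2.fin he)
    rw [mul_right_comm] at he
    have h2 := ihq h.2 (B_abs_left h.2.fin h.1.fin he)
    simp only [Proc.size]
    omega

theorem Red.not_small {l : List (A × Proc A)} (hl : ∀ x ∈ l, x.2.IsFin) {X X' W : Proc A}
    (hX : Red (B l) X) (hX' : X'.IsFin) (hW : W.IsFin) (hlt : X'.size < X.size)
    (h : B l * cl X' = B l * cl X * cl W) : False := by
  induction hn : X'.size generalizing X X' W with
  | zero =>
    rw [cl_eq_one_of_size hX' hn, mul_one] at h
    have := hX.size_zero (B_abs_left hX.fin hW h.symm)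
    omega
  | succ n ih =>
    obtain ⟨a, X1, hs⟩ := fin_exists_step hX' (by omega)
    have h1 : qs (B l * cl X') a (B l * cl X1) := qs_mul_right _ (qs_cl.2 ⟨_, hs, rfl⟩)
    have h2 := hs.fin hX'
    rw [h] at h1
    rcases qs_mul.1 h1 with ⟨w, hw, e⟩ | ⟨w, hw, e⟩
    · have hw0 := hw
      clear hw
      rcases qs_mul.1 hw0 with ⟨w, hw, rfl⟩ | ⟨w, hw, rfl⟩
      · obtain ⟨H, hH, rfl⟩ := qs_B.1 hw
        refine ih (W := Proc.par H W) hX h2.1 ⟨hl _ hH, hW⟩ (by omega) ?_ (by omega)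
        rw [e, cl_par]
        ac_rfl
      · obtain ⟨X2, h3, rfl⟩ := qs_cl.1 hw
        have h4 := h3.fin hX.fin
        exact ih (hX.step h3) h2.1 hW (by omega) e (by omega)
    · obtain ⟨W', h3, rfl⟩ := qs_cl.1 hw
      exact ih hX h2.1 (h3.fin hW).1 (by omega) e (by omega)

/-- Cancellation of the replicated part for reduced terms. -/
theorem Red.cancel {l : List (A × Proc A)} (hl : ∀ x ∈ l, x.2.IsFin) {X Y : Proc A}
    (hX : Red (B l) X) (hY : Red (B l) Y) (h : B l * cl X = B l * cl Y) : cl X = cl Y := by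
  have key : ∀ X Y : Proc A, Red (B l) X → Red (B l) Y → B l * cl X = B l * cl Y →
      ∀ a X', Step X a X' → ∃ Y', Step Y a Y' ∧ B l * cl X' = B l * cl Y' := by
    intro X Y hX hY h a X' hs
    have h1 : qs (B l * cl X) a (B l * cl X') := qs_mul_right _ (qs_cl.2 ⟨_, hs, rfl⟩)
    have h2 := hs.fin hX.fin
    rw [h] at h1
    rcases qs_mul.1 h1 with ⟨w, hw, e⟩ | ⟨w, hw, e⟩
    · obtain ⟨H, hH, rfl⟩ := qs_B.1 hw
      exfalso
      refine Red.not_small hl hX h2.1 (hl _ hH) (by omega) ?_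
      rw [e, h]
      ac_rfl
    · obtain ⟨Y', h3, rfl⟩ := qs_cl.1 hw
      exact ⟨Y', h3, e⟩
  rw [cl_eq]
  refine Bisim.coind (fun X Y => Red (B l) X ∧ Red (B l) Y ∧ B l * cl X = B l * cl Y) ?_ ?_
    ⟨hX, hY, h⟩
  · rintro X Y ⟨hX, hY, h⟩ a X' hs
    obtain ⟨Y', h1, h2⟩ := key X Y hX hY h a X' hs
    exact ⟨Y', h1, hX.step hs, hY.step h1, h2⟩
  · rintro X Y ⟨hX, hY, h⟩ a X' hs
    obtain ⟨Y', h1, h2⟩ := key Y X hY hX h.symm a X' hs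
    exact ⟨Y', h1, hX.step h1, hY.step hs, h2.symm⟩

theorem FCtx.fill_congr (D : FCtx A) {p q : Proc A} (h : EqD p q) :
    EqD (D.fill p) (D.fill q) := by
  induction D with
  | hole => exact h
  | pre a d ih => exact EqD.congPre a ih
  | par d f ih => exact EqD.congPar ih (EqD.refl _)

/-- A non-reduced finite term contains an absorbed prefix with a reduced body. -/
theorem not_red {l : List (A × Proc A)} {F : Proc A} (hF : F.IsFin) (h : ¬ Red (B l) F) :
    ∃ (D : FCtx A) (a : A) (H : Proc A), D.Wf ∧ Red (B l) H ∧
      B l * cl (Proc.pre a H) = B l ∧ EqD F (D.fill (Proc.pre a H)) ∧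
      (D.fill Proc.nil).IsFin ∧ B l * cl F = B l * cl (D.fill Proc.nil) ∧
      (D.fill Proc.nil).size < F.size := by
  induction F with
  | nil => exact absurd trivial h
  | repl => exact hF.elim
  | pre a p ih =>
    by_cases hp : Red (B l) p
    · have h1 : B l * cl (Proc.pre a p) = B l := by
        by_contra h2
        exact h ⟨h2, hp⟩
      refine ⟨FCtx.hole, a, p, trivial, hp, h1, EqD.refl _, trivial, ?_, ?_⟩
      · rw [h1]
        exact (mul_one _).symm
      · simp [FCtx.fill, Proc.size]
    · obtain ⟨D, b, H, h1, h2, h3, h4, h5, h6, h7⟩ := ih hF hp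
      refine ⟨FCtx.pre a D, b, H, h1, h2, h3, EqD.congPre a h4, h5, B_pre_congr a h6, ?_⟩
      simp only [FCtx.fill, Proc.size]
      omega
  | par p q ihp ihq =>
    by_cases hp : Red (B l) p
    · have hq : ¬ Red (B l) q := fun hq => h ⟨hp, hq⟩
      obtain ⟨D, b, H, h1, h2, h3, h4, h5, h6, h7⟩ := ihq hF.2 hq
      refine ⟨FCtx.par D p, b, H, ⟨h1, hF.1⟩, h2, h3,
        (EqD.parComm _ _).trans (EqD.congPar h4 (EqD.refl _)), ⟨h5, hF.1⟩, ?_, ?_⟩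
      · change B l * (cl p * cl q) = B l * (cl (D.fill Proc.nil) * cl p)
        rw [← mul_assoc (B l) (cl (D.fill Proc.nil)), ← h6]
        ac_rfl
      · simp only [FCtx.fill, Proc.size]
        omega
    · obtain ⟨D, b, H, h1, h2, h3, h4, h5, h6, h7⟩ := ihp hF.1 hp
      refine ⟨FCtx.par D q, b, H, ⟨h1, hF.2⟩, h2, h3,
        EqD.congPar h4 (EqD.refl _), ⟨h5, hF.2⟩, ?_, ?_⟩
      · change B l * (cl p * cl q) = B l * (cl (D.fill Proc.nil) * cl q)
        rw [← mul_assoc, ← mul_assoc, ← h6]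
      · simp only [FCtx.fill, Proc.size]
        omega

end Replication

end CCS

namespace CCS

section Main
variable {A : Type}

theorem Ctx.fill_congr (C : Ctx A) {p q : Proc A} (h : EqD p q) :
    EqD (C.fill p) (C.fill q) := by
  induction C with
  | ofD d => exact d.fill_congr h
  | repl a d => exact EqD.congRepl a (d.fill_congr h)
  | par c r ih => exact EqD.congPar ih (EqD.refl _)

theorem IsFin.wf {p : Proc A} (h : p.IsFin) : p.Wf := by
  induction p with
  | nil => trivial
  | pre a p => exact h
  | par p q ihp ihq => exact ⟨ihp h.1, ihq h.2⟩
  | repl => exact h.elim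

theorem prodT_rp_wf {l : List (A × Proc A)} (h : ∀ x ∈ l, x.2.IsFin) : (prodT rp l).Wf := by
  induction l with
  | nil => trivial
  | cons x l ih => exact ⟨h x (by simp), ih fun y hy => h y (by simp [hy])⟩

theorem prodT_rp_size_cons (x : A × Proc A) (l : List (A × Proc A)) :
    (prodT rp (x :: l)).size = x.2.size + 1 + (prodT rp l).size := rfl

theorem prodT_rp_size_perm {l m : List (A × Proc A)} (h : l.Perm m) :
    (prodT rp l).size = (prodT rp m).size := by
  induction h with
  | nil => rfl
  | cons x _ ih => rw [prodT_rp_size_cons, prodT_rp_size_cons, ih]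
  | swap x y l => simp only [prodT_rp_size_cons]; omega
  | trans _ _ ih ih' => exact ih.trans ih'

theorem B_perm {l m : List (A × Proc A)} (h : l.Perm m) : B l = B m := (prodT_perm rp h).sound

theorem wf_decomp {P : Proc A} (h : P.Wf) : ∃ (l : List (A × Proc A)) (F : Proc A),
    (∀ x ∈ l, x.2.IsFin) ∧ F.IsFin ∧ EqD P (Proc.par (prodT rp l) F) ∧
      P.size = (prodT rp l).size + F.size := by
  induction P with
  | nil => exact ⟨[], Proc.nil, by simp, trivial, (EqD.parNil _).symm, rfl⟩
  | pre a p =>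
    exact ⟨[], Proc.pre a p, by simp, h, (EqD.nilPar _).symm, by simp [prodT_nil, Proc.size]⟩
  | repl a p =>
    refine ⟨[(a, p)], Proc.nil, by intro x hx; rw [List.mem_singleton.1 hx]; exact h, trivial, ?_, ?_⟩
    · exact ((EqD.parNil _).trans (EqD.parNil _)).symm
    · simp [prodT_rp_size_cons, prodT_nil, Proc.size]
  | par p q ihp ihq =>
    obtain ⟨l, F, h1, h2, h3, h4⟩ := ihp h.1
    obtain ⟨l', F', h1', h2', h3', h4'⟩ := ihq h.2
    refine ⟨l ++ l', Proc.par F F', ?_, ⟨h2, h2'⟩, ?_, ?_⟩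
    · intro x hx
      rcases List.mem_append.1 hx with hx | hx
      · exact h1 x hx
      · exact h1' x hx
    · exact (EqD.congPar h3 h3').trans ((EqD.par4 _ _ _ _).trans
        (EqD.congPar (prodT_append _ _ _).symm (EqD.refl _)))
    · have : ∀ l : List (A × Proc A), (prodT rp (l ++ l')).size
          = (prodT rp l).size + (prodT rp l').size := by
        intro l
        induction l with
        | nil => simp [prodT_nil, Proc.size]
        | cons x l ih => rw [List.cons_append, prodT_rp_size_cons, prodT_rp_size_cons, ih]; omega
      rw [this]
      simp only [Proc.size]
      omega

theorem perm_of_mem {l : List (A × Proc A)} {x : A × Proc A} (h : x ∈ l) :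
    ∃ l', l.Perm (x :: l') := by
  obtain ⟨u, v, rfl⟩ := List.append_of_mem h
  exact ⟨u ++ v, List.perm_middle⟩

/-- Replacing the body of a replicated prefix by an equivalent one. -/
theorem B_replace {l l' : List (A × Proc A)} {a : A} {H H' : Proc A}
    (hp : l.Perm ((a, H) :: l')) (h : B l * cl H = B l * cl H') : B l = B ((a, H') :: l') := by
  apply B_cover
  · intro b K hK
    rcases List.mem_cons.1 (hp.subset hK) with e | e
    · obtain ⟨rfl, rfl⟩ := Prod.mk.inj e
      exact ⟨H', by simp, h⟩
    · exact ⟨K, by simp [e], rfl⟩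
  · intro b K hK
    rcases List.mem_cons.1 hK with e | e
    · obtain ⟨rfl, rfl⟩ := Prod.mk.inj e
      exact ⟨H, hp.symm.subset (by simp), h⟩
    · exact ⟨K, hp.symm.subset (by simp [e]), rfl⟩

/-- Action and class of the body. -/
def fp (x : A × Proc A) : A × Q A := (x.1, cl x.2)

theorem B_dup {l : List (A × Proc A)} {x y : A × Proc A} (h : fp x = fp y) :
    B (x :: y :: l) = B (x :: l) := by
  obtain ⟨a, F⟩ := x
  obtain ⟨b, G⟩ := y
  obtain ⟨h1, h2⟩ := Prod.mk.inj h
  simp only at h1 h2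
  subst h1
  apply B_cover
  · intro b K hK
    simp only [List.mem_cons, Prod.mk.injEq] at hK
    rcases hK with ⟨rfl, rfl⟩ | ⟨rfl, rfl⟩ | hK
    · exact ⟨K, by simp, rfl⟩
    · exact ⟨F, by simp, by rw [h2]⟩
    · exact ⟨K, by simp [hK], rfl⟩
  · intro b K hK
    rcases List.mem_cons.1 hK with e | e
    · exact ⟨K, by simp [e], rfl⟩
    · exact ⟨K, by simp [e], rfl⟩

theorem exists_dup {C : Type} (f : A × Proc A → C) {l : List (A × Proc A)}
    (h : ¬ (l.map f).Nodup) :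
    ∃ x y l', l.Perm (x :: y :: l') ∧ f x = f y := by
  induction l with
  | nil => exact absurd List.nodup_nil h
  | cons x l ih =>
    by_cases hx : f x ∈ l.map f
    · obtain ⟨y, hy, e⟩ := List.mem_map.1 hx
      obtain ⟨l', hl'⟩ := perm_of_mem hy
      exact ⟨x, y, l', hl'.cons x, e.symm⟩
    · have h1 : ¬ (l.map f).Nodup := fun hn => h (by
        rw [List.map_cons]
        exact List.nodup_cons.2 ⟨hx, hn⟩)
      obtain ⟨u, v, l', hp, e⟩ := ih h1
      refine ⟨u, v, x :: l', (hp.cons x).trans ?_, e⟩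
      exact (List.Perm.swap _ _ _).trans ((List.Perm.swap _ _ _).cons u)

theorem main {P S : Proc A} (hP : P.Wf) (hS : IsSeed S) (hbis : Bisim P S) :
    EqD P S ∨ ∃ P', Rw S P P' ∧ Bisim P P' := by
  obtain ⟨l, F, hl, hF, eP, -⟩ := wf_decomp hP
  obtain ⟨m, E, hm, hE, eS, hsz⟩ := wf_decomp hS.1
  have cP : cl P = B l * cl F := eP.sound
  have cS : cl S = B m * cl E := eS.sound
  have hPS : B l * cl F = B m * cl E := by rw [← cP, ← cS]; exact cl_eq.2 hbis
  have hB : B l = B m := B_eq_of_eq hl hm hF hE hPS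
  have hmin : ∀ (m' : List (A × Proc A)) (E' : Proc A), (∀ x ∈ m', x.2.IsFin) → E'.IsFin →
      B m' * cl E' = B m * cl E →
      (prodT rp m).size + E.size ≤ (prodT rp m').size + E'.size := by
    intro m' E' h1 h2 h3
    have := hS.2 (Proc.par (prodT rp m') E') ⟨prodT_rp_wf h1, IsFin.wf h2⟩
      (cl_eq.1 (h3.trans cS.symm))
    simp only [Proc.size] at this
    omega
  -- the seed is reduced
  have rE : Red (B m) E := by
    by_contra h
    obtain ⟨D, a, H, -, -, -, -, h5, h6, h7⟩ := not_red hE h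
    have := hmin m _ hm h5 h6.symm
    omega
  have rm : ∀ x ∈ m, Red (B m) x.2 := by
    rintro ⟨b, G⟩ hx
    by_contra h
    obtain ⟨D, a, H, -, -, -, -, h5, h6, h7⟩ := not_red (hm _ hx) h
    obtain ⟨m', hp⟩ := perm_of_mem hx
    have h8 := B_replace hp h6
    have := hmin ((b, D.fill Proc.nil) :: m') E (by
      intro y hy
      rcases List.mem_cons.1 hy with rfl | hy
      · exact h5
      · exact hm y (hp.symm.subset (by simp [hy]))) hE (by rw [← h8])
    rw [prodT_rp_size_perm hp, prodT_rp_size_cons, prodT_rp_size_cons] at this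
    simp only at this h7
    omega
  have nm : (m.map fp).Nodup := by
    by_contra h
    obtain ⟨x, y, m', hp, e⟩ := exists_dup fp h
    have := hmin (x :: m') E (by
      intro z hz
      apply hm z (hp.symm.subset _)
      rcases List.mem_cons.1 hz with rfl | hz
      · simp
      · simp [hz]) hE (by rw [B_perm hp, B_dup e])
    rw [prodT_rp_size_perm hp, prodT_rp_size_cons, prodT_rp_size_cons,
      prodT_rp_size_cons] at this
    omega
  -- availability of rule B1
  have hB1 : ∀ (C : Ctx A) (a : A) (H : Proc A), C.Wf → Red (B m) H →
      B m * cl (Proc.pre a H) = B m → EqD P (C.fill (Proc.pre a H)) →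
      Rw S P (C.fill Proc.nil) := by
    intro C a H hC rH hab hPC
    obtain ⟨K, hK, e⟩ := B_absorbed hab
    have hHK : EqD H K := fin_complete rH.fin (hm _ hK) (Red.cancel hm rH (rm _ hK) e)
    obtain ⟨m', hp⟩ := perm_of_mem hK
    have hS' : EqD S (Proc.par (Proc.repl a K) (Proc.par (prodT rp m') E)) :=
      eS.trans ((EqD.congPar (prodT_perm rp hp) (EqD.refl _)).trans (EqD.parAssoc _ _ _))
    refine Rw.eqD hS' (hPC.trans (C.fill_congr (EqD.congPre a hHK))) (Rw.B1 C (hm _ hK) ?_ hC)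
      (EqD.refl _)
    exact ⟨prodT_rp_wf fun y hy => hm y (hp.symm.subset (by simp [hy])), IsFin.wf hE⟩
  by_cases rF : Red (B m) F
  swap
  · right
    obtain ⟨D, a, H, h1, h2, h3, h4, h5, h6, h7⟩ := not_red hF rF
    refine ⟨(Ctx.par (Ctx.ofD D) (prodT rp l)).fill Proc.nil, hB1 _ a H
      ⟨h1, prodT_rp_wf hl⟩ h2 h3 ?_, ?_⟩
    · exact eP.trans ((EqD.parComm _ _).trans (EqD.congPar h4 (EqD.refl _)))
    · rw [← cl_eq, cP, hB, h6, mul_comm]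
      change _ = cl (D.fill Proc.nil) * B l
      rw [hB]
  by_cases rl : ∀ x ∈ l, Red (B m) x.2
  swap
  · right
    push Not at rl
    obtain ⟨⟨b, G⟩, hx, rG⟩ := rl
    obtain ⟨D, a, H, h1, h2, h3, h4, h5, h6, h7⟩ := not_red (hl _ hx) rG
    obtain ⟨l', hp⟩ := perm_of_mem hx
    refine ⟨(Ctx.par (Ctx.repl b D) (Proc.par (prodT rp l') F)).fill Proc.nil, hB1 _ a H
      ⟨h1, prodT_rp_wf fun y hy => hl y (hp.symm.subset (by simp [hy])), IsFin.wf hF⟩ h2 h3 ?_, ?_⟩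
    · refine eP.trans ((EqD.congPar (prodT_perm rp hp) (EqD.refl _)).trans
        ((EqD.parAssoc _ _ _).trans (EqD.congPar ?_ (EqD.refl _))))
      exact EqD.congRepl b h4
    · rw [← hB] at h6
      rw [← cl_eq, cP, B_replace hp h6]
      exact mul_assoc (cl (rp (b, D.fill Proc.nil))) (B l') (cl F)
  by_cases nl : (l.map fp).Nodup
  swap
  · right
    obtain ⟨⟨a, G⟩, ⟨b, G'⟩, l', hp, e⟩ := exists_dup fp nl
    have hcl := B_dup (l := l') e
    obtain ⟨h1, h2⟩ := Prod.mk.inj e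
    simp only at h1 h2
    subst h1
    have hG : G.IsFin := hl (a, G) (hp.symm.subset (by simp))
    have hG' : G'.IsFin := hl (a, G') (hp.symm.subset (by simp))
    have hGG : EqD G G' := fin_complete hG hG' h2
    refine ⟨Proc.par (Proc.repl a G) (Proc.par (prodT rp l') F), ?_, ?_⟩
    · refine Rw.eqD (EqD.refl S) ?_ (Rw.B2 (a := a) (F := G) (P := Proc.par (prodT rp l') F) hG
        ⟨prodT_rp_wf fun y hy => hl y (hp.symm.subset (by simp [hy])), IsFin.wf hF⟩ hS.1)
        (EqD.refl _)
      refine eP.trans ((EqD.congPar (prodT_perm rp hp) (EqD.refl _)).trans ?_)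
      refine (EqD.parAssoc _ _ _).trans (EqD.congPar (EqD.refl _) ?_)
      exact (EqD.parAssoc _ _ _).trans (EqD.congPar (EqD.congRepl a hGG.symm) (EqD.refl _))
    · rw [← cl_eq, cP, B_perm hp, hcl]
      exact mul_assoc (cl (rp (a, G))) (B l') (cl F)
  left
  have hFE : EqD F E := by
    rw [hB] at hPS
    exact fin_complete hF hE (Red.cancel hm rF rE hPS)
  have hlm : EqD (prodT rp l) (prodT rp m) := by
    apply prodT_match rp fp
    · rw [List.perm_ext_iff_of_nodup nl nm]
      rintro ⟨a, z⟩
      constructor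
      · intro hz
        obtain ⟨⟨b, G⟩, hx, e⟩ := List.mem_map.1 hz
        obtain ⟨rfl, rfl⟩ := Prod.mk.inj e
        have h1 := B_absorb hx
        rw [hB] at h1
        obtain ⟨K, hK, e2⟩ := B_absorbed h1
        have h2 := Red.cancel hm (rl _ hx) (rm _ hK) e2
        exact List.mem_map.2 ⟨_, hK, by rw [fp]; exact Prod.ext rfl h2.symm⟩
      · intro hz
        obtain ⟨⟨b, G⟩, hx, e⟩ := List.mem_map.1 hz
        obtain ⟨rfl, rfl⟩ := Prod.mk.inj e
        have h1 := B_absorb hx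
        rw [← hB] at h1
        obtain ⟨K, hK, e2⟩ := B_absorbed h1
        rw [hB] at e2
        have h2 := Red.cancel hm (rm _ hx) (rl _ hK) e2
        exact List.mem_map.2 ⟨_, hK, by rw [fp]; exact Prod.ext rfl h2.symm⟩
    · rintro ⟨a, G⟩ hx ⟨b, G'⟩ hy e
      obtain ⟨h1, h2⟩ := Prod.mk.inj e
      simp only at h1 h2
      subst h1
      exact EqD.congRepl a (fin_complete (hl _ hx) (hm _ hy) h2)
  exact eP.trans ((EqD.congPar hlm hFE).trans eS.symm)

end Main

end CCS

/-- For every process `P`, either `P ≡D seed(P)`, or `P ⤳_{seed(P)} P'` for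
some `P'` with `P ~ P'`. -/
theorem eqD_or_rw_step_to_seed {A : Type} [Countable A]
    (P S : CCS.Proc A) (hP : P.Wf) (hS : CCS.IsSeed S)
    (hbis : CCS.Bisim P S) :
    CCS.EqD P S ∨ ∃ P', CCS.Rw S P P' ∧ CCS.Bisim P P' := by
  exact CCS.main hP hS hbis
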